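/- arXiv:2206.02576 — 2 statements merged into one kernel-verified Lean document; each statement's English description precedes it below -/
import Mathlib

section
/- Let G be a (possibly infinite) chordal simple graph in which every independent set of vertices is finite. Then G is strongly perfect: for every induced subgraph H of G there exist a partition of the vertices of H into independent sets and a clique of H meeting every independent set of the partition. -/
/-!
It suffices to find, for every vertex set `W`, an idempotent map `f` of `W` with independent fibres
whose image is a clique (`Retracts`): the fibres are the partition and the image is the clique.

Independent sets are bounded in size (`exists_alphaLe`). For a finite chordal graph, a bound on the
independence number gives a labelling by a bounded number of labels such that each label class is
a clique, and the vertices of smaller label with a neighbour in a given class form a clique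
(`exists_layerDec`). By compactness the whole graph has such a labelling
(`exists_global_layering`).

The set `W` is now built up layer by layer. A new layer `Q` attaches to the previous layers along a
clique `R`, so the new set is a clique sum of the old one and `R ∪ Q`; clique sums preserve
retractability by comparing cardinals of unused colours (`Retracts.glue`). It remains to treat
a union of two disjoint cliques (`Retracts.of_two_cliques`). There non-adjacency is a Ferrers
relation, because the graph has no induced 4-cycle, and what is needed is König duality in its
infinite form, a matching and a vertex cover consisting of one vertex from each matching edge. For
Ferrers relations this is proved by induction on the cardinality, after removing a maximal wave
(`exists_split`).
-/

/-- A graph is chordal if every cycle of length at least 4 has a chord: an edge of the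
graph joining two non-consecutive vertices of the cycle (i.e. an edge on two vertices
of the cycle which is not an edge of the cycle). -/
def IsChordal {V : Type*} (G : SimpleGraph V) : Prop :=
  ∀ (v : V) (c : G.Walk v v), c.IsCycle → 4 ≤ c.length →
    ∃ x y, x ∈ c.support ∧ y ∈ c.support ∧ G.Adj x y ∧ s(x, y) ∉ c.edges

/-- An independent set: pairwise non-adjacent vertices. -/
def IsIndepSet' {V : Type*} (G : SimpleGraph V) (S : Set V) : Prop :=
  S.Pairwise fun a b => ¬ G.Adj a b

/-- A graph is strongly perfect if in every induced subgraph (given by a set `W` of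
vertices) there are a partition of `W` into independent sets and a clique inside `W`
meeting every member of the partition. -/
def IsStronglyPerfect {V : Type*} (G : SimpleGraph V) : Prop :=
  ∀ W : Set V, ∃ (D : Set (Set V)) (K : Set V),
    K ⊆ W ∧ G.IsClique K ∧
    (∀ T ∈ D, T ⊆ W ∧ IsIndepSet' G T) ∧
    D.PairwiseDisjoint id ∧ ⋃₀ D = W ∧
    ∀ T ∈ D, (T ∩ K).Nonempty

open Relation Cardinal

/-! ### Neighbourhoods in chordal graphs -/

/-- The only direct use of chordality. Two neighbours `u ≠ v` of `r` are adjacent as soon as they are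
joined by a path whose interior avoids the closed neighbourhood of `r`: otherwise a shortest such
path closes up through `r` to a chordless cycle of length at least 4. -/
theorem hole_adj {V : Type*} {G : SimpleGraph V} (hG : IsChordal G) {r u v p q : V}
    (hru : G.Adj r u) (hrv : G.Adj r v) (huv : u ≠ v) (hup : G.Adj u p)
    (hp : ¬ G.Adj r p) (hpr : p ≠ r)
    (hpq : ReflTransGen (fun x y => G.Adj x y ∧ ¬ G.Adj r y ∧ y ≠ r) p q)
    (hqv : G.Adj q v) : G.Adj u v := by
  by_contra hnuv
  let S : Set V := {x | (¬ G.Adj r x ∧ x ≠ r) ∨ x = u ∨ x = v}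
  let H : SimpleGraph V := SimpleGraph.fromRel fun x y => G.Adj x y ∧ x ∈ S ∧ y ∈ S
  have hH : ∀ x y, H.Adj x y ↔ G.Adj x y ∧ x ∈ S ∧ y ∈ S := by
    intro x y
    simp only [H, SimpleGraph.fromRel_adj]
    constructor
    · rintro ⟨-, h | h⟩
      · exact h
      · exact ⟨h.1.symm, h.2.2, h.2.1⟩
    · intro h
      exact ⟨h.1.ne, Or.inl h⟩
  have hle : H ≤ G := fun x y h => ((hH x y).1 h).1
  have huS : u ∈ S := Or.inr (Or.inl rfl)
  have hvS : v ∈ S := Or.inr (Or.inr rfl)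
  have hrS : r ∉ S := by
    rintro (h | h | h)
    · exact h.2 rfl
    · exact hru.ne h
    · exact hrv.ne h
  have hreach : ∀ q, ReflTransGen (fun x y => G.Adj x y ∧ ¬ G.Adj r y ∧ y ≠ r) p q →
      H.Reachable u q ∧ (¬ G.Adj r q ∧ q ≠ r) := by
    intro q hpq
    induction hpq with
    | refl => exact ⟨((hH _ _).2 ⟨hup, huS, Or.inl ⟨hp, hpr⟩⟩).reachable, hp, hpr⟩
    | tail _ hbc ih =>
      exact ⟨ih.1.trans ((hH _ _).2 ⟨hbc.1, Or.inl ih.2, Or.inl hbc.2⟩).reachable, hbc.2⟩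
  have huq := hreach q hpq
  have hreachv : H.Reachable u v :=
    huq.1.trans ((hH _ _).2 ⟨hqv, Or.inl huq.2, hvS⟩).reachable
  obtain ⟨w, hw⟩ := hreachv.exists_walk_length_eq_dist
  have hwp := w.isPath_of_length_eq_dist hw
  have hlen : 1 < w.length := by
    rw [hw]
    exact hreachv.one_lt_dist_of_ne_of_not_adj huv fun h => hnuv (hle h)
  have hsupp : ∀ x ∈ w.support, x ∈ S := by
    intro x hx
    obtain ⟨n, rfl, hn⟩ := SimpleGraph.Walk.mem_support_iff_exists_getVert.1 hx
    cases n with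
    | zero => simpa using huS
    | succ n => exact ((hH _ _).1 (w.adj_getVert_succ (by omega : n < w.length))).2.2
  have hdist : ∀ n ≤ w.length, H.dist u (w.getVert n) = n := by
    intro n hn
    have := SimpleGraph.length_eq_dist_of_subwalk hw (w.isSubwalk_take n)
    rw [← this, SimpleGraph.Walk.take_length]
    omega
  let c : G.Walk r r := .cons hru ((w.mapLe hle).concat hrv.symm)
  have hcsupp : ∀ x, x ∈ c.support → x = r ∨ x ∈ w.support := by
    intro x hx
    simp only [c, SimpleGraph.Walk.support_cons, SimpleGraph.Walk.support_concat,
      SimpleGraph.Walk.support_mapLe_eq_support] at hx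
    simp only [List.mem_cons, List.mem_append, List.not_mem_nil,
      or_false] at hx
    tauto
  have hcedges : ∀ e, e ∈ c.edges ↔ e = s(r, u) ∨ e ∈ w.edges ∨ e = s(v, r) := by
    intro e
    simp only [c, SimpleGraph.Walk.edges_cons, SimpleGraph.Walk.edges_concat,
      SimpleGraph.Walk.edges_mapLe_eq_edges]
    simp
  have hcyc : c.IsCycle := by
    rw [SimpleGraph.Walk.cons_isCycle_iff, SimpleGraph.Walk.concat_isPath_iff,
      SimpleGraph.Walk.isPath_mapLe, SimpleGraph.Walk.support_mapLe_eq_support]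
    refine ⟨⟨hwp, fun h => hrS (hsupp r h)⟩, ?_⟩
    simp only [SimpleGraph.Walk.edges_concat, SimpleGraph.Walk.edges_mapLe_eq_edges,
      List.concat_eq_append, List.mem_append, List.mem_singleton]
    rintro (h | h)
    · exact hrS (hsupp r (w.fst_mem_support_of_mem_edges h))
    · rw [Sym2.eq_iff] at h
      rcases h with ⟨h, -⟩ | ⟨-, h⟩
      · exact hrv.ne h
      · exact huv h
  have hclen : 4 ≤ c.length := by
    simp only [c, SimpleGraph.Walk.length_cons, SimpleGraph.Walk.length_concat,
      SimpleGraph.Walk.length_map]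
    omega
  -- A chord at `r` ends in `u` or `v`, hence is an edge of the cycle.
  have hr : ∀ y ∈ w.support, G.Adj r y → s(r, y) ∈ c.edges := by
    intro y hy hry
    rcases hsupp y hy with h | h | h
    · exact absurd hry h.1
    · exact (hcedges _).2 (Or.inl (by rw [h]))
    · exact (hcedges _).2 (Or.inr (Or.inr (by rw [h, Sym2.eq_swap])))
  obtain ⟨x, y, hx, hy, hxy, hne⟩ := hG r c hcyc hclen
  rcases hcsupp x hx with rfl | hx
  · rcases hcsupp y hy with rfl | hy
    · exact hxy.ne rfl
    · exact hne (hr y hy hxy)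
  rcases hcsupp y hy with rfl | hy
  · rw [Sym2.eq_swap] at hne
    exact hne (hr x hx hxy.symm)
  -- A chord inside the shortest path joins vertices at consecutive distances from `u`.
  have hHxy : H.Adj x y := (hH _ _).2 ⟨hxy, hsupp x hx, hsupp y hy⟩
  have hedge : ∀ n < w.length, s(w.getVert n, w.getVert (n + 1)) ∈ c.edges := by
    intro n hn
    refine (hcedges _).2 (Or.inr (Or.inl ?_))
    have := w.toSubgraph_adj_getVert hn
    rwa [← SimpleGraph.Walk.mem_edges_toSubgraph]
  obtain ⟨i, rfl, hi⟩ := SimpleGraph.Walk.mem_support_iff_exists_getVert.1 hx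
  obtain ⟨j, rfl, hj⟩ := SimpleGraph.Walk.mem_support_iff_exists_getVert.1 hy
  have h1 := hHxy.diff_dist_adj (u := u)
  rw [hdist i hi, hdist j hj] at h1
  have hij : i ≠ j := by
    rintro rfl
    exact hxy.ne rfl
  rcases h1 with h1 | h1 | h1
  · exact hij h1.symm
  · subst h1
    exact hne (hedge i (by omega))
  · obtain rfl : i = j + 1 := by omega
    rw [Sym2.eq_swap] at hne
    exact hne (hedge j (by omega))

/-- Common neighbours of two distinct non-adjacent vertices form a clique. -/
theorem common_nbr_adj {V : Type*} {G : SimpleGraph V} (hG : IsChordal G) {r w u v : V}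
    (hrw : ¬ G.Adj r w) (hne : w ≠ r) (hru : G.Adj r u) (hrv : G.Adj r v)
    (hwu : G.Adj w u) (hwv : G.Adj w v) (huv : u ≠ v) : G.Adj u v :=
  hole_adj hG hru hrv huv hwu.symm hrw hne .refl hwv

/-! ### Bounding the independence number -/

/-- The independence number of the subgraph induced on `X` is at most `k`. -/
def AlphaLe {V : Type*} (G : SimpleGraph V) (X : Set V) (k : ℕ) : Prop :=
  ∀ I : Finset V, (I : Set V) ⊆ X → IsIndepSet' G (I : Set V) → I.card ≤ k

theorem AlphaLe.mono {V : Type*} {G : SimpleGraph V} {X Y : Set V} {k : ℕ}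
    (h : AlphaLe G Y k) (hXY : X ⊆ Y) : AlphaLe G X k :=
  fun I hI hi => h I (hI.trans hXY) hi

theorem AlphaLe.union {V : Type*} {G : SimpleGraph V} {X Y : Set V} {k l : ℕ}
    (hX : AlphaLe G X k) (hY : AlphaLe G Y l) : AlphaLe G (X ∪ Y) (k + l) := by
  classical
  intro I hI hi
  have h1 := hX (I.filter (· ∈ X)) (fun x hx => by simpa using (Finset.mem_filter.1 hx).2)
    (hi.mono fun x hx => (Finset.mem_filter.1 hx).1)
  have h2 := hY (I.filter (· ∉ X))
    (fun x hx => by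
      have hx := Finset.mem_filter.1 hx
      exact (hI hx.1).resolve_left hx.2)
    (hi.mono fun x hx => (Finset.mem_filter.1 hx).1)
  have := Finset.card_filter_add_card_filter_not (s := I) (· ∈ X)
  omega

theorem AlphaLe.of_clique {V : Type*} {G : SimpleGraph V} {X : Set V}
    (hX : G.IsClique X) : AlphaLe G X 1 := by
  intro I hI hi
  rw [Finset.card_le_one]
  intro a ha b hb
  by_contra hab
  exact hi ha hb hab (hX (hI ha) (hI hb) hab)

/-- The vertices outside the closed neighbourhood of `I`. -/
def farFrom {V : Type*} (G : SimpleGraph V) (I : Set V) : Set V :=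
  {x | ∀ y ∈ I, x ≠ y ∧ ¬ G.Adj x y}

/-- Finiteness of all independent sets gives a uniform bound on their size. Otherwise take an
independent set `I`, maximal such that the graph far from `I` still has unbounded independence
number; two non-adjacent vertices `v`, `w` far from `I` cover that graph by the non-neighbours of
`v`, the non-neighbours of `w` and a clique of common neighbours, three sets of bounded
independence number. -/
theorem exists_alphaLe {V : Type*} {G : SimpleGraph V} (hG : IsChordal G)
    (hfin : ∀ S : Set V, IsIndepSet' G S → S.Finite) : ∃ k, AlphaLe G Set.univ k := by
  classical
  by_contra hcon
  obtain ⟨I, hI⟩ := zorn_le_nonempty₀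
    {I : Set V | IsIndepSet' G I ∧ ¬ ∃ k, AlphaLe G (farFrom G I) k}
    (by
      intro c hc hchain y hy
      have hind : IsIndepSet' G (⋃₀ c) := by
        rintro a ⟨s, hs, has⟩ b ⟨t, ht, hbt⟩ hab
        rcases hchain.total hs ht with h | h
        · exact (hc ht).1 (h has) hbt hab
        · exact (hc hs).1 has (h hbt) hab
      have hf := hfin _ hind
      obtain ⟨t, ht, hmem⟩ : ∃ t ∈ c, ⋃₀ c ⊆ t := by
        have := hchain.directedOn.exists_mem_subset_of_finite_of_subset_sUnion ⟨y, hy⟩ hf subset_rfl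
        exact this
      exact ⟨t, hc ht, fun z hz => (Set.subset_sUnion_of_mem hz).trans hmem⟩)
    ∅ ⟨by simp [IsIndepSet'], by
      rintro ⟨k, hk⟩
      exact hcon ⟨k, hk.mono fun x _ => by simp [farFrom]⟩⟩
  obtain ⟨-, hmax⟩ := hI
  have hunb := hmax.prop.2
  set X := farFrom G I with hX
  have hstep : ∀ v ∈ X, ∃ k, AlphaLe G {x ∈ X | x ≠ v ∧ ¬ G.Adj x v} k := by
    intro v hv
    by_contra hk
    have hins : insert v I ∈ {I : Set V | IsIndepSet' G I ∧ ¬ ∃ k, AlphaLe G (farFrom G I) k} := by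
      refine ⟨?_, ?_⟩
      · refine hmax.prop.1.insert fun b hb _ => ⟨(hv b hb).2, fun h => (hv b hb).2 h.symm⟩
      · rintro ⟨k, h⟩
        refine hk ⟨k, h.mono ?_⟩
        rintro x ⟨hx, hxv⟩ y (rfl | hy)
        · exact hxv
        · exact hx y hy
    have := hmax.le_of_ge hins (Set.subset_insert _ _) (Set.mem_insert v I)
    exact (hv v this).1 rfl
  have hcl : ¬ G.IsClique X := fun h => hunb ⟨1, .of_clique h⟩
  obtain ⟨v, hv, w, hw, hvw, hnadj⟩ : ∃ v ∈ X, ∃ w ∈ X, v ≠ w ∧ ¬ G.Adj v w := by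
    by_contra h
    push Not at h
    exact hcl fun v hv w hw hvw => h v hv w hw hvw
  obtain ⟨k, hk⟩ := hstep v hv
  obtain ⟨l, hl⟩ := hstep w hw
  have hcom : G.IsClique {x | G.Adj v x ∧ G.Adj w x} := by
    intro x hx y hy hxy
    exact common_nbr_adj hG hnadj hvw.symm hx.1 hy.1 hx.2 hy.2 hxy
  refine hunb ⟨_, ((hk.union hl).union (.of_clique hcom)).mono ?_⟩
  intro x hx
  by_cases h1 : x ≠ v ∧ ¬ G.Adj x v
  · exact Or.inl (Or.inl ⟨hx, h1⟩)
  by_cases h2 : x ≠ w ∧ ¬ G.Adj x w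
  · exact Or.inl (Or.inr ⟨hx, h2⟩)
  right
  have hxv : x = v ∨ G.Adj x v := by tauto
  have hxw : x = w ∨ G.Adj x w := by tauto
  rcases hxv with rfl | hxv
  · exact absurd ⟨hvw, hnadj⟩ h2
  rcases hxw with rfl | hxw
  · exact absurd ⟨hvw.symm, fun h => hnadj h.symm⟩ h1
  exact ⟨hxv.symm, hxw.symm⟩

/-! ### Layerings of finite vertex sets -/

/-- `y` can be reached from `x` along a walk whose vertices after `x` lie in `B`. -/
def Reach {V : Type*} (G : SimpleGraph V) (B : Set V) : V → V → Prop :=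
  ReflTransGen fun p q => G.Adj p q ∧ q ∈ B

theorem Reach.mono {V : Type*} {G : SimpleGraph V} {B C : Set V} (h : B ⊆ C) {x y : V}
    (hxy : Reach G B x y) : Reach G C x y :=
  ReflTransGen.mono (fun _ _ hab => ⟨hab.1, h hab.2⟩) _ _ hxy

theorem Reach.mem {V : Type*} {G : SimpleGraph V} {B : Set V} {x y : V}
    (hxy : Reach G B x y) (hx : x ∈ B) : y ∈ B := by
  induction hxy with
  | refl => exact hx
  | tail _ h _ => exact h.2

theorem Reach.symm {V : Type*} {G : SimpleGraph V} {B : Set V} {x y : V}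
    (hxy : Reach G B x y) (hx : x ∈ B) : Reach G B y x := by
  induction hxy with
  | refl => exact .refl
  | tail hab h ih => exact ReflTransGen.head ⟨h.1.symm, Reach.mem hab hx⟩ ih

/-- If every vertex of a finite clique `K` has a neighbour in the connected set `B`, then one vertex
of `B` is adjacent to all of `K`. -/
theorem exists_complete_vertex {V : Type*} {G : SimpleGraph V} (hG : IsChordal G) {B : Set V}
    (hB : B.Nonempty) (hconn : ∀ x ∈ B, ∀ y ∈ B, Reach G B x y) (K : Finset V) :
    G.IsClique (K : Set V) → (∀ k ∈ K, ∃ b ∈ B, G.Adj k b) → (∀ k ∈ K, k ∉ B) →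
      ∃ b ∈ B, ∀ k ∈ K, G.Adj k b := by
  classical
  induction K using Finset.induction_on with
  | empty =>
    intro _ _ _
    obtain ⟨b, hb⟩ := hB
    exact ⟨b, hb, by simp⟩
  | insert r K hrK ih =>
    intro hK hnb hdisj
    obtain ⟨b, hb, hbK⟩ := ih (hK.subset (by simp))
      (fun k hk => hnb k (Finset.mem_insert_of_mem hk))
      (fun k hk => hdisj k (Finset.mem_insert_of_mem hk))
    by_cases hrb : G.Adj r b
    · exact ⟨b, hb, by simpa using ⟨hrb, hbK⟩⟩
    have hrB : r ∉ B := hdisj r (Finset.mem_insert_self _ _)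
    obtain ⟨z₀, hz₀, hrz₀⟩ := hnb r (Finset.mem_insert_self _ _)
    -- `z` is the first neighbour of `r` on a walk in `B` from `b`, and `y` is its predecessor.
    have key : ∀ x, Reach G B b x →
        (ReflTransGen (fun x y => G.Adj x y ∧ ¬ G.Adj r y ∧ y ≠ r) b x ∧ ¬ G.Adj r x) ∨
        ∃ y z, ReflTransGen (fun x y => G.Adj x y ∧ ¬ G.Adj r y ∧ y ≠ r) b y ∧
          G.Adj y z ∧ z ∈ B ∧ G.Adj r z := by
      intro x hx
      induction hx with
      | refl => exact Or.inl ⟨.refl, hrb⟩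
      | tail hab h ih =>
        rename_i y z
        rcases ih with ih | ih
        · by_cases hrz : G.Adj r z
          · exact Or.inr ⟨y, z, ih.1, h.1, h.2, hrz⟩
          · exact Or.inl ⟨ih.1.tail ⟨h.1, hrz, fun e => hrB (e ▸ h.2)⟩, hrz⟩
        · exact Or.inr ih
    rcases key z₀ (hconn b hb z₀ hz₀) with h | ⟨y, z, hby, hyz, hzB, hrz⟩
    · exact absurd hrz₀ h.2
    refine ⟨z, hzB, fun s hs => ?_⟩
    rcases Finset.mem_insert.1 hs with rfl | hs'
    · exact hrz
    have hrs : G.Adj r s := hK (by simp) (by simp [hs']) (fun e => hrK (e ▸ hs'))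
    exact hole_adj hG hrs hrz (fun e => hdisj s hs (e ▸ hzB)) (hbK s hs') hrb
      (fun e => hrB (e ▸ hb)) hby hyz

/-- `R ∪ X` has a layering with base layer `R` (label `0`) and at most `n` layers covering `X`:
every layer is a clique, and the vertices in lower layers with a neighbour in a given layer form
a clique too. -/
def LayerDec {V : Type*} (G : SimpleGraph V) (R X : Set V) (n : ℕ) : Prop :=
  ∃ lam : V → ℕ, (∀ r ∈ R, lam r = 0) ∧ (∀ x ∈ X, 1 ≤ lam x ∧ lam x ≤ n) ∧
    (∀ x ∈ R ∪ X, ∀ y ∈ R ∪ X, lam x = lam y → x ≠ y → G.Adj x y) ∧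
    ∀ w ∈ R ∪ X, ∀ w' ∈ R ∪ X, ∀ u ∈ R ∪ X, ∀ u' ∈ R ∪ X, lam w = lam w' →
      lam u < lam w → lam u' < lam w → G.Adj u w → G.Adj u' w' → u ≠ u' → G.Adj u u'

theorem layerDec_empty {V : Type*} {G : SimpleGraph V} {R : Set V} (hR : G.IsClique R) (n : ℕ) :
    LayerDec G R ∅ n := by
  refine ⟨fun _ => 0, by simp, by simp, ?_, by simp⟩
  intro x hx y hy _ hxy
  rw [Set.union_empty] at hx hy
  exact hR hx hy hxy

theorem AlphaLe.eq_empty {V : Type*} {G : SimpleGraph V} {X : Set V} (h : AlphaLe G X 0) :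
    X = ∅ := by
  rw [Set.eq_empty_iff_forall_notMem]
  intro x hx
  have := h {x} (by simpa using hx) (by simp [IsIndepSet'])
  simp at this

theorem IsIndepSet'.insert_finset {V : Type*} [DecidableEq V] {G : SimpleGraph V}
    {I : Finset V} {x : V}
    (hI : IsIndepSet' G (I : Set V)) (hx : ∀ y ∈ I, ¬ G.Adj x y) :
    IsIndepSet' G ((insert x I : Finset V) : Set V) := by
  rw [Finset.coe_insert]
  exact Set.Pairwise.insert hI fun y hy _ => ⟨hx y hy, fun h => hx y hy h.symm⟩

/-- Layerings of the components of `B` over the common base clique `K` are stacked into a layering of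
`B`. The bound `k` on the independence number of `B` bounds the number of components. -/
theorem layerDec_combine {V : Type*} {G : SimpleGraph V} {j m : ℕ}
    (IH : ∀ R X : Set V, R.Finite → X.Finite → Disjoint R X → G.IsClique R → AlphaLe G X j →
      LayerDec G R X m) {K : Set V} (hKf : K.Finite) (hK : G.IsClique K) (k : ℕ) :
    ∀ B : Set V, B.Finite → Disjoint K B → AlphaLe G B k →
      (∀ b ∈ B, AlphaLe G {x | Reach G B b x} j) → LayerDec G K B (k * m) := by
  classical
  induction k with
  | zero =>
    intro B _ _ hα _
    rw [hα.eq_empty]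
    exact layerDec_empty hK _
  | succ k ih =>
    intro B hB hKB hα hcomp
    rcases B.eq_empty_or_nonempty with rfl | ⟨b, hb⟩
    · exact layerDec_empty hK _
    set C : Set V := {x | Reach G B b x} with hC
    have hCB : C ⊆ B := fun x hx => Reach.mem hx hb
    have hbC : b ∈ C := ReflTransGen.refl
    have hCadj : ∀ x ∈ C, ∀ y ∈ B, G.Adj x y → y ∈ C := fun x hx y hy hxy =>
      ReflTransGen.tail hx ⟨hxy, hy⟩
    obtain ⟨l₁, h10, h1b, h1a, h1q⟩ := ih (B \ C) (hB.subset Set.sdiff_subset)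
      (hKB.mono_right Set.sdiff_subset)
      (by
        intro I hI hi
        have hbI : b ∉ I := fun h => (hI h).2 hbC
        have := hα (insert b I) (by
          rw [Finset.coe_insert]
          exact Set.insert_subset hb (hI.trans Set.sdiff_subset))
          (hi.insert_finset fun y hy h => (hI hy).2 (hCadj b hbC y (hI hy).1 h))
        rw [Finset.card_insert_of_notMem hbI] at this
        omega)
      (fun b' hb' => (hcomp b' hb'.1).mono fun x hx => Reach.mono Set.sdiff_subset hx)
    obtain ⟨l₂, h20, h2b, h2a, h2q⟩ := IH K C hKf (hB.subset hCB) (hKB.mono_right hCB) hK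
      (hcomp b hb)
    have hKC : ∀ x ∈ K, x ∉ C := fun x hx hxC => Set.disjoint_left.1 hKB hx (hCB hxC)
    have hmem : ∀ x ∈ K ∪ B, x ∉ C → x ∈ K ∪ (B \ C) := by
      rintro x (hx | hx) hxC
      · exact Or.inl hx
      · exact Or.inr ⟨hx, hxC⟩
    have hl1 : ∀ x ∈ K ∪ B, x ∉ C → l₁ x ≤ k * m := by
      intro x hx hxC
      rcases hmem x hx hxC with h | h
      · rw [h10 x h]; omega
      · exact (h1b x h).2
    let lam : V → ℕ := fun x => if x ∈ C then l₂ x + k * m else l₁ x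
    have lC : ∀ x, x ∈ C → lam x = l₂ x + k * m := fun x hx => if_pos hx
    have lN : ∀ x, x ∉ C → lam x = l₁ x := fun x hx => if_neg hx
    -- Labels in `C` exceed all the others.
    have hsep : ∀ x ∈ K ∪ B, ∀ y ∈ C, x ∉ C → lam x < lam y := by
      intro x hx y hy hxC
      rw [lN x hxC, lC y hy]
      have := hl1 x hx hxC
      have := (h2b y hy).1
      omega
    refine ⟨lam, ?_, ?_, ?_, ?_⟩
    · intro r hr
      rw [lN r (hKC r hr), h10 r hr]
    · intro x hx
      by_cases hxC : x ∈ C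
      · rw [lC x hxC]
        have := h2b x hxC
        constructor
        · omega
        · rw [Nat.succ_mul]; omega
      · rw [lN x hxC]
        have := h1b x ⟨hx, hxC⟩
        refine ⟨this.1, ?_⟩
        rw [Nat.succ_mul]; omega
    · intro x hx y hy hxy hne
      by_cases hxC : x ∈ C <;> by_cases hyC : y ∈ C
      · rw [lC x hxC, lC y hyC] at hxy
        exact h2a x (Or.inr hxC) y (Or.inr hyC) (by omega) hne
      · have := hsep y hy x hxC hyC
        omega
      · have := hsep x hx y hyC hxC
        omega
      · rw [lN x hxC, lN y hyC] at hxy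
        exact h1a x (hmem x hx hxC) y (hmem y hy hyC) hxy hne
    · intro w hw w' hw' u hu u' hu' hww huw hu'w haw haw' hne
      by_cases hwC : w ∈ C
      · have hw'C : w' ∈ C := by
          by_contra h
          have := hsep w' hw' w hwC h
          omega
        have hin : ∀ u ∈ K ∪ B, ∀ w ∈ C, G.Adj u w → u ∈ K ∪ C := by
          rintro u (hu | hu) w hw a
          · exact Or.inl hu
          · exact Or.inr (hCadj w hw u hu a.symm)
        have hlt : ∀ u ∈ K ∪ C, ∀ w ∈ C, lam u < lam w → l₂ u < l₂ w := by
          rintro u (hu | hu) w hw h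
          · rw [h20 u hu]
            exact (h2b w hw).1
          · rw [lC u hu, lC w hw] at h
            omega
        have hww2 : l₂ w = l₂ w' := by
          rw [lC w hwC, lC w' hw'C] at hww
          omega
        have hu2 := hin u hu w hwC haw
        have hu'2 := hin u' hu' w' hw'C haw'
        exact h2q w (Or.inr hwC) w' (Or.inr hw'C) u hu2 u' hu'2 hww2 (hlt u hu2 w hwC huw)
          (hlt u' hu'2 w hwC hu'w) haw haw' hne
      · have hw'C : w' ∉ C := by
          intro h
          have := hsep w hw w' h hwC
          omega
        have huC : u ∉ C := by
          intro h
          have := hsep w hw u h hwC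
          omega
        have hu'C : u' ∉ C := by
          intro h
          have := hsep w hw u' h hwC
          omega
        rw [lN _ hwC] at hww huw hu'w
        rw [lN _ hw'C] at hww
        rw [lN _ huC] at huw
        rw [lN _ hu'C] at hu'w
        exact h1q w (hmem w hw hwC) w' (hmem w' hw' hw'C) u (hmem u hu huC) u'
          (hmem u' hu' hu'C) hww huw hu'w haw haw' hne

/-- Finite sets of independence number at most `j` have layerings whose number of layers depends
only on `j`. With `T` the first layer chosen maximal, every component of `X \ T` has smaller
independence number: otherwise `X \ T` is connected and every vertex of the clique to which it
attaches has a neighbour in it, so a complete vertex could be added to `T`. -/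
theorem exists_layerDec {V : Type*} {G : SimpleGraph V} (hG : IsChordal G) (j : ℕ) :
    ∃ m, ∀ R X : Set V, R.Finite → X.Finite → Disjoint R X → G.IsClique R → AlphaLe G X j →
      LayerDec G R X m := by
  classical
  induction j with
  | zero =>
    refine ⟨0, fun R X _ _ _ hR hα => ?_⟩
    rw [hα.eq_empty]
    exact layerDec_empty hR _
  | succ j ih =>
    obtain ⟨m, IH⟩ := ih
    refine ⟨(j + 1) * m + 1, fun R X hRf hXf hRX hR hα => ?_⟩
    -- `Kof T` contains all vertices of `R ∪ T` with a neighbour in `X \ T`; a maximal `T` for which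
    -- `Kof T` is a clique is the first layer.
    let Kof : Set V → Set V := fun T => T ∪ {r ∈ R | ∃ x ∈ X \ T, G.Adj r x}
    obtain ⟨T, hTmax⟩ := (hXf.finite_subsets.subset
      (show {T | T ⊆ X ∧ G.IsClique (Kof T)} ⊆ {T | T ⊆ X} from fun T hT => hT.1)).exists_maximal
      ⟨∅, by simp, by
        refine hR.subset ?_
        rintro x (hx | hx)
        · exact hx.elim
        · exact hx.1⟩
    obtain ⟨hTX, hTK⟩ := hTmax.prop
    set B := X \ T with hB
    set K := Kof T with hKdef
    have hKf : K.Finite := (hXf.subset hTX).union (hRf.subset fun r hr => hr.1)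
    have hBX : B ⊆ X := Set.sdiff_subset
    have hKB : Disjoint K B := by
      rw [Set.disjoint_left]
      rintro x (hx | hx) hxB
      · exact hxB.2 hx
      · exact Set.disjoint_left.1 hRX hx.1 (hBX hxB)
    have hcomp : ∀ b ∈ B, AlphaLe G {x | Reach G B b x} j := by
      intro b hb I hI hi
      by_contra hcard
      have hIB : (I : Set V) ⊆ B := fun x hx => Reach.mem (hI hx) hb
      -- An independent set of size `j + 1` cannot be enlarged inside `X`.
      have hdom : ∀ x ∈ X, x ∉ I → ∃ y ∈ I, G.Adj x y := by
        intro x hx hxI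
        by_contra h
        push Not at h
        have := hα (insert x I) (by
          rw [Finset.coe_insert]
          exact Set.insert_subset hx (hIB.trans hBX)) (hi.insert_finset h)
        rw [Finset.card_insert_of_notMem hxI] at this
        omega
      have hbx : ∀ x ∈ B, Reach G B b x := by
        intro x hx
        by_cases hxI : x ∈ I
        · exact hI hxI
        · obtain ⟨y, hy, hxy⟩ := hdom x (hBX hx) hxI
          exact ReflTransGen.tail (hI hy) ⟨hxy.symm, hx⟩
      obtain ⟨c, hcB, hc⟩ := exists_complete_vertex hG ⟨b, hb⟩
        (fun x hx y hy => (Reach.symm (hbx x hx) hb).trans (hbx y hy)) hKf.toFinset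
        (by simpa using hTK)
        (by
          intro k hk
          rw [Set.Finite.mem_toFinset] at hk
          rcases hk with hk | hk
          · obtain ⟨y, hy, hxy⟩ := hdom k (hTX hk) fun h => (hIB h).2 hk
            exact ⟨y, hIB hy, hxy⟩
          · exact hk.2)
        (by
          intro k hk
          rw [Set.Finite.mem_toFinset] at hk
          exact Set.disjoint_left.1 hKB hk)
      have hins : insert c T ∈ {T | T ⊆ X ∧ G.IsClique (Kof T)} := by
        refine ⟨Set.insert_subset (hBX hcB) hTX, ?_⟩
        have hsub : Kof (insert c T) ⊆ insert c K := by
          rintro x ((rfl | hx) | ⟨hx, y, hy, hxy⟩)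
          · exact Or.inl rfl
          · exact Or.inr (Or.inl hx)
          · exact Or.inr (Or.inr ⟨hx, y, ⟨hy.1, fun h => hy.2 (Or.inr h)⟩, hxy⟩)
        refine SimpleGraph.IsClique.subset hsub (hTK.insert fun y hy _ => ?_)
        exact (hc y (by simpa using hy)).symm
      exact hcB.2 (hTmax.le_of_ge hins (Set.subset_insert _ _) (Set.mem_insert c T))
    obtain ⟨l, hl0, hlb, hla, hlq⟩ := layerDec_combine IH hKf hTK (j + 1) B (hXf.subset hBX) hKB
      (hα.mono hBX) hcomp
    let lam : V → ℕ := fun x => if x ∈ T then 1 else if x ∈ B then l x + 1 else 0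
    have lT : ∀ x ∈ T, lam x = 1 := fun x hx => if_pos hx
    have lB : ∀ x ∈ B, lam x = l x + 1 := fun x hx => by
      simp only [lam]
      rw [if_neg hx.2, if_pos hx]
    have lR : ∀ x ∈ R, lam x = 0 := fun x hx => by
      have hxX : x ∉ X := Set.disjoint_left.1 hRX hx
      simp only [lam]
      rw [if_neg fun h => hxX (hTX h), if_neg fun h => hxX (hBX h)]
    have hcases : ∀ x ∈ R ∪ X, x ∈ R ∨ x ∈ T ∨ x ∈ B := by
      rintro x (hx | hx)
      · exact Or.inl hx
      · by_cases hxT : x ∈ T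
        · exact Or.inr (Or.inl hxT)
        · exact Or.inr (Or.inr ⟨hx, hxT⟩)
    have hTcl : G.IsClique T := hTK.subset fun x hx => Or.inl hx
    refine ⟨lam, lR, ?_, ?_, ?_⟩
    · intro x hx
      rcases hcases x (Or.inr hx) with h | h | h
      · exact absurd hx (Set.disjoint_left.1 hRX h)
      · rw [lT x h]; omega
      · rw [lB x h]
        have := hlb x h
        omega
    · intro x hx y hy hxy hne
      rcases hcases x hx with h | h | h <;> rcases hcases y hy with h' | h' | h'
      · exact hR h h' hne
      · rw [lR x h, lT y h'] at hxy; omega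
      · rw [lR x h, lB y h'] at hxy; omega
      · rw [lT x h, lR y h'] at hxy; omega
      · exact hTcl h h' hne
      · rw [lT x h, lB y h'] at hxy
        have := hlb y h'
        omega
      · rw [lB x h, lR y h'] at hxy; omega
      · rw [lB x h, lT y h'] at hxy
        have := hlb x h
        omega
      · rw [lB x h, lB y h'] at hxy
        exact hla x (Or.inr h) y (Or.inr h') (by omega) hne
    · intro w hw w' hw' u hu u' hu' hww huw hu'w haw haw' hne
      rcases hcases w hw with h | h | h
      · rw [lR w h] at huw; omega
      · have hin : ∀ u ∈ R ∪ X, lam u < lam w → u ∈ R := by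
          intro u hu hlt
          rw [lT w h] at hlt
          rcases hcases u hu with g | g | g
          · exact g
          · rw [lT u g] at hlt; omega
          · rw [lB u g] at hlt; omega
        exact hR (hin u hu huw) (hin u' hu' hu'w) hne
      · have h' : w' ∈ B := by
          have := hlb w h
          rw [lB w h] at hww
          rcases hcases w' hw' with g | g | g
          · rw [lR _ g] at hww; omega
          · rw [lT _ g] at hww; omega
          · exact g
        have hin : ∀ u ∈ R ∪ X, ∀ w ∈ B, G.Adj u w → u ∈ K ∪ B := by
          intro u hu w hw a
          rcases hcases u hu with g | g | g
          · exact Or.inl (Or.inr ⟨g, w, hw, a⟩)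
          · exact Or.inl (Or.inl g)
          · exact Or.inr g
        have hlt : ∀ u ∈ K ∪ B, lam u < lam w → l u < l w := by
          rintro u (g | g) hlt
          · rw [hl0 u g]
            exact (hlb w h).1
          · rw [lB u g, lB w h] at hlt
            omega
        have hww2 : l w = l w' := by
          rw [lB w h, lB w' h'] at hww
          omega
        have hu2 := hin u hu w h haw
        have hu'2 := hin u' hu' w' h' haw'
        exact hlq w (Or.inr h) w' (Or.inr h') u hu2 u' hu'2 hww2 (hlt u hu2 huw)
          (hlt u' hu'2 hu'w) haw haw' hne

/-! ### Layering of the whole graph -/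

/-- The layering of the whole graph: the limit of the layerings of finite subsets along an
ultrafilter, available because the number of layers is uniformly bounded. -/
theorem exists_global_layering {V : Type*} {G : SimpleGraph V} (hG : IsChordal G)
    (hfin : ∀ S : Set V, IsIndepSet' G S → S.Finite) :
    ∃ (n : ℕ) (lam : V → ℕ), (∀ x, lam x ≤ n) ∧
      (∀ x y, lam x = lam y → x ≠ y → G.Adj x y) ∧
      ∀ w w' u u', lam w = lam w' → lam u < lam w → lam u' < lam w → G.Adj u w → G.Adj u' w' →
        u ≠ u' → G.Adj u u' := by
  classical
  obtain ⟨k, hk⟩ := exists_alphaLe hG hfin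
  obtain ⟨n, hn⟩ := exists_layerDec hG k
  have hF : ∀ F : Finset V, LayerDec G ∅ (F : Set V) n := fun F =>
    hn ∅ F Set.finite_empty F.finite_toSet (Set.empty_disjoint _) (by simp)
      (hk.mono (Set.subset_univ _))
  choose l _ hb ha hq using hF
  let U : Ultrafilter (Finset V) := Ultrafilter.of Filter.atTop
  have hU : ∀ v : V, ∀ᶠ F in (U : Filter (Finset V)), v ∈ F := fun v =>
    Ultrafilter.of_le Filter.atTop
      ((Filter.eventually_ge_atTop ({v} : Finset V)).mono fun F hF => by simpa using hF)
  have hlim : ∀ v : V, ∃ i ≤ n, ∀ᶠ F in (U : Filter (Finset V)), l F v = i := by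
    intro v
    have h1 : ∀ᶠ F in (U : Filter (Finset V)), ∃ i ∈ Set.Iic n, l F v = i :=
      (hU v).mono fun F hF => ⟨_, (hb F v hF).2, rfl⟩
    rw [Ultrafilter.eventually_exists_mem_iff (Set.finite_Iic n)] at h1
    exact h1
  choose lam hlam hlim using hlim
  refine ⟨n, lam, hlam, ?_, ?_⟩
  · intro x y hxy hne
    obtain ⟨F, h1, h2, h3, h4⟩ := ((hU x).and ((hU y).and ((hlim x).and (hlim y)))).exists
    exact ha F x (Or.inr h1) y (Or.inr h2) (by omega) hne
  · intro w w' u u' hww hu hu' haw haw' hne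
    obtain ⟨F, ⟨h1, h2, h3, h4⟩, h5, h6, h7, h8⟩ :=
      (((hU w).and ((hU w').and ((hU u).and (hU u')))).and
        ((hlim w).and ((hlim w').and ((hlim u).and (hlim u'))))).exists
    exact hq F w (Or.inr h1) w' (Or.inr h2) u (Or.inr h3) u' (Or.inr h4) (by omega) (by omega)
      (by omega) haw haw' hne

/-! ### König duality for Ferrers relations -/

/-- The relation `N` between `A` and `B` is Ferrers: the neighbourhoods of the elements of `B` are
linearly ordered by inclusion. -/
def Ferrers {V : Type*} (N : V → V → Prop) (A B : Set V) : Prop :=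
  ∀ a₁ ∈ A, ∀ a₂ ∈ A, ∀ b₁ ∈ B, ∀ b₂ ∈ B, N a₁ b₁ → N a₂ b₂ → N a₁ b₂ ∨ N a₂ b₁

/-- König duality for the bipartite graph `N` on `A`, `B`: the set `A₁ ∪ (B \ B₁)` is a vertex cover,
`f` matches `A₁` into `B₁` and `g` matches `B \ B₁` into `A \ A₁`. -/
def Split {V : Type*} (N : V → V → Prop) (A B : Set V) : Prop :=
  ∃ A₁ ⊆ A, ∃ B₁ ⊆ B, ∃ f g : V → V, (∀ a ∈ A₁, f a ∈ B₁ ∧ N a (f a)) ∧ Set.InjOn f A₁ ∧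
    (∀ b ∈ B \ B₁, g b ∈ A \ A₁ ∧ N (g b) b) ∧ Set.InjOn g (B \ B₁) ∧
    ∀ a ∈ A \ A₁, ∀ b ∈ B₁, ¬ N a b


theorem Split.of_flip {V : Type*} {N : V → V → Prop} {A B : Set V}
    (h : Split (fun b a => N a b) B A) : Split N A B := by
  obtain ⟨B₁, hB₁, A₁, hA₁, f, g, hf, hfi, hg, hgi, hcl⟩ := h
  have eA : A \ (A \ A₁) = A₁ := Set.sdiff_sdiff_cancel_left hA₁
  have eB : B \ (B \ B₁) = B₁ := Set.sdiff_sdiff_cancel_left hB₁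
  refine ⟨A \ A₁, Set.sdiff_subset, B \ B₁, Set.sdiff_subset, g, f, hg, hgi, ?_, ?_, ?_⟩
  · rw [eA, eB]
    exact hf
  · rw [eB]
    exact hfi
  · rw [eA]
    exact fun a ha b hb => hcl b hb a ha

theorem Ferrers.flip {V : Type*} {N : V → V → Prop} {A B : Set V} (h : Ferrers N A B) :
    Ferrers (fun b a => N a b) B A :=
  fun b hb b' hb' a ha a' ha' hab hab' => (h a ha a' ha' b hb b' hb' hab hab').symm

theorem Ferrers.mono {V : Type*} {N : V → V → Prop} {A B A' B' : Set V} (h : Ferrers N A B)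
    (hA : A' ⊆ A) (hB : B' ⊆ B) : Ferrers N A' B' :=
  fun a ha a' ha' b hb b' hb' => h a (hA ha) a' (hA ha') b (hB hb) b' (hB hb')

/-- Transfinite greedy choice: at most `κ` sets, each with at least `κ` elements, have distinct
representatives. -/
theorem exists_greedy {V : Type*} {κ : Cardinal} (S : Set V) (hS : #S ≤ κ)
    (T : V → Set V) (hT : ∀ s ∈ S, κ ≤ #(T s)) :
    ∃ g : V → V, (∀ s ∈ S, g s ∈ T s) ∧ Set.InjOn g S := by
  classical
  obtain ⟨r, hr, hord⟩ := Cardinal.exists_ord_eq S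
  have hwf : WellFounded r := hr.wf
  let step : (s : S) → ((t : S) → r t s → V) → V := fun s ih =>
    if h : (T s \ Set.range fun t : {t : S // r t s} => ih t.1 t.2).Nonempty then h.some else s
  let g : S → V := hwf.fix step
  have hg : ∀ s : S, g s ∈ T s \ Set.range fun t : {t : S // r t s} => g t.1 := by
    intro s
    have hne : (T s \ Set.range fun t : {t : S // r t s} => g t.1).Nonempty := by
      refine Cardinal.sdiff_nonempty_of_mk_lt_mk ?_
      calc #(Set.range fun t : {t : S // r t s} => g t.1) ≤ #{t : S // r t s} :=
            Cardinal.mk_range_le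
        _ < #S := Cardinal.card_typein_lt (r := r) s hord
        _ ≤ κ := hS
        _ ≤ #(T s) := hT s s.2
    have : g s = step s fun t _ => g t := hwf.fix_eq step s
    rw [this]
    simp only [step]
    rw [dif_pos hne]
    exact hne.some_mem
  have hinj : Function.Injective g := by
    intro s t hst
    rcases trichotomous_of r s t with h | h | h
    · exact absurd ⟨⟨s, h⟩, hst⟩ (hg t).2
    · exact h
    · exact absurd ⟨⟨t, h⟩, hst.symm⟩ (hg s).2
  refine ⟨fun x => if h : x ∈ S then g ⟨x, h⟩ else x, ?_, ?_⟩
  · intro s hs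
    simp only [hs, dif_pos]
    exact (hg ⟨s, hs⟩).1
  · intro x hx y hy hxy
    simp only [hx, hy, dif_pos] at hxy
    simpa using hinj hxy

/-- All of `B` can be matched into `A` along `N`. -/
def Matchable {V : Type*} (N : V → V → Prop) (A B : Set V) : Prop :=
  ∃ g : V → V, (∀ b ∈ B, g b ∈ A ∧ N (g b) b) ∧ Set.InjOn g B

/-- A wave: a set `M` of pairs along `N`, assigning distinct elements of `B` to the elements of its
domain, such that every `N`-neighbour in `A` of a used element of `B` is in the domain.
Partners of an element of `A` need not be unique, so that unions of chains of waves are waves. -/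
structure IsWave {V : Type*} (N : V → V → Prop) (A B : Set V) (M : Set (V × V)) : Prop where
  mem : ∀ a b, (a, b) ∈ M → a ∈ A ∧ b ∈ B ∧ N a b
  inj : ∀ a a' b, (a, b) ∈ M → (a', b) ∈ M → a = a'
  closed : ∀ a b, (a, b) ∈ M → ∀ x ∈ A, N x b → ∃ y, (x, y) ∈ M

/-- There is no nonempty wave, and no element of `B` is isolated. -/
structure Waveless {V : Type*} (N : V → V → Prop) (A B : Set V) : Prop where
  eq_empty : ∀ M, IsWave N A B M → M = ∅
  exists_nbr : ∀ b ∈ B, ∃ a ∈ A, N a b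

/-- Wavelessness passes to a part `A'`, `B'` in which `A'` contains all neighbours of `B'`. -/
theorem Waveless.sub {V : Type*} {N : V → V → Prop} {A B A' B' : Set V} (h : Waveless N A B)
    (hA : A' ⊆ A) (hB : B' ⊆ B) (hcl : ∀ b ∈ B', ∀ a ∈ A, N a b → a ∈ A') :
    Waveless N A' B' where
  eq_empty M hM := h.eq_empty M
    { mem := fun a b hab =>
        have := hM.mem a b hab
        ⟨hA this.1, hB this.2.1, this.2.2⟩
      inj := hM.inj
      closed := fun a b hab a' ha' hn =>
        hM.closed a b hab a' (hcl b (hM.mem a b hab).2.1 a' ha' hn) hn }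
  exists_nbr b hb := by
    obtain ⟨a, ha, hab⟩ := h.exists_nbr b (hB hb)
    exact ⟨a, hcl b hb a ha hab, hab⟩

/-- The side `A₁` of a split is a wave, so without waves a split matches all of `B`. -/
theorem Waveless.matchable {V : Type*} {N : V → V → Prop} {A B : Set V} (h : Waveless N A B)
    (hs : Split N A B) : Matchable N A B := by
  obtain ⟨A₁, hA₁, B₁, hB₁, f, g, hf, hfi, hg, hgi, hcl⟩ := hs
  have hM := h.eq_empty {p | p.1 ∈ A₁ ∧ p.2 = f p.1}
    { mem := by
        rintro a b ⟨ha, rfl : b = f a⟩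
        exact ⟨hA₁ ha, hB₁ (hf a ha).1, (hf a ha).2⟩
      inj := by
        rintro a a' b ⟨ha, hb : b = f a⟩ ⟨ha', hb' : b = f a'⟩
        exact hfi ha ha' (hb.symm.trans hb')
      closed := by
        rintro a b ⟨ha, rfl : b = f a⟩ a' ha' hn
        refine ⟨f a', ?_, rfl⟩
        by_contra hna
        exact hcl a' ⟨ha', hna⟩ _ (hf a ha).1 hn }
  have hA₁e : ∀ a, a ∉ A₁ := by
    intro a ha
    have : (a, f a) ∈ {p : V × V | p.1 ∈ A₁ ∧ p.2 = f p.1} := ⟨ha, rfl⟩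
    rw [hM] at this
    exact this
  have hB₁e : ∀ b, b ∉ B₁ := by
    intro b hb
    obtain ⟨a, ha, hab⟩ := h.exists_nbr b (hB₁ hb)
    exact hcl a ⟨ha, hA₁e a⟩ b hb hab
  have hsub : B ⊆ B \ B₁ := fun b hb => ⟨hb, hB₁e b⟩
  exact ⟨g, fun b hb => ⟨(hg b (hsub hb)).1.1, (hg b (hsub hb)).2⟩, hgi.mono hsub⟩

/-- Removing a maximal wave leaves a waveless remainder; the wave together with a matching of the
remainder is a split. -/
theorem Split.of_waveless {V : Type*} {N : V → V → Prop} {A B : Set V}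
    (h : ∀ A' ⊆ A, ∀ B' ⊆ B, Waveless N A' B' → Matchable N A' B') : Split N A B := by
  classical
  obtain ⟨M, hMax⟩ := zorn_le₀ {M | IsWave N A B M} (by
    intro c hc hchain
    refine ⟨⋃₀ c, ?_, fun z hz => Set.subset_sUnion_of_mem hz⟩
    refine ⟨?_, ?_, ?_⟩
    · rintro a b ⟨M, hM, hab⟩
      exact (hc hM).mem a b hab
    · rintro a a' b ⟨M, hM, hab⟩ ⟨M', hM', hab'⟩
      rcases hchain.total hM hM' with hle | hle
      · exact (hc hM').inj a a' b (hle hab) hab'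
      · exact (hc hM).inj a a' b hab (hle hab')
    · rintro a b ⟨M, hM, hab⟩ a' ha' hn
      obtain ⟨b', hb'⟩ := (hc hM).closed a b hab a' ha' hn
      exact ⟨b', M, hM, hb'⟩)
  have hM : IsWave N A B M := hMax.prop
  let A₁ : Set V := {a | ∃ b, (a, b) ∈ M}
  let B₁ : Set V := {b ∈ B | ∀ a ∈ A, N a b → a ∈ A₁}
  have hMB₁ : ∀ a b, (a, b) ∈ M → b ∈ B₁ := fun a b hab =>
    ⟨(hM.mem a b hab).2.1, hM.closed a b hab⟩
  have hA₁ : A₁ ⊆ A := fun a ⟨b, hab⟩ => (hM.mem a b hab).1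
  have hw : Waveless N (A \ A₁) (B \ B₁) := by
    refine ⟨?_, ?_⟩
    · intro M' hM'
      have hU : IsWave N A B (M ∪ M') := by
        refine ⟨?_, ?_, ?_⟩
        · rintro a b (hab | hab)
          · exact hM.mem a b hab
          · have := hM'.mem a b hab
            exact ⟨this.1.1, this.2.1.1, this.2.2⟩
        · rintro a a' b (hab | hab) (hab' | hab')
          · exact hM.inj a a' b hab hab'
          · exact absurd (hMB₁ a b hab) (hM'.mem a' b hab').2.1.2
          · exact absurd (hMB₁ a' b hab') (hM'.mem a b hab).2.1.2
          · exact hM'.inj a a' b hab hab'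
        · rintro a b (hab | hab) a' ha' hn
          · obtain ⟨b', hb'⟩ := hM.closed a b hab a' ha' hn
            exact ⟨b', Or.inl hb'⟩
          · by_cases ha'1 : a' ∈ A₁
            · obtain ⟨b', hb'⟩ := ha'1
              exact ⟨b', Or.inl hb'⟩
            · obtain ⟨b', hb'⟩ := hM'.closed a b hab a' ⟨ha', ha'1⟩ hn
              exact ⟨b', Or.inr hb'⟩
      have hle : M ∪ M' ⊆ M := hMax.le_of_ge hU Set.subset_union_left
      rw [Set.eq_empty_iff_forall_notMem]
      rintro ⟨a, b⟩ hab
      exact (hM'.mem a b hab).2.1.2 (hMB₁ a b (hle (Or.inr hab)))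
    · rintro b ⟨hb, hb1⟩
      by_contra hcon
      push Not at hcon
      refine hb1 ⟨hb, fun a ha hab => ?_⟩
      by_contra ha1
      exact hcon a ⟨ha, ha1⟩ hab
  obtain ⟨g, hg, hgi⟩ := h _ Set.sdiff_subset _ Set.sdiff_subset hw
  let f : V → V := fun a => if ha : ∃ b, (a, b) ∈ M then ha.choose else a
  have hf : ∀ a ∈ A₁, (a, f a) ∈ M := by
    intro a ha
    have ha' : ∃ b, (a, b) ∈ M := ha
    simp only [f]
    rw [dif_pos ha']
    exact ha'.choose_spec
  refine ⟨A₁, hA₁, B₁, fun b hb => hb.1, f, g,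
    fun a ha => ⟨hMB₁ _ _ (hf a ha), (hM.mem _ _ (hf a ha)).2.2⟩, ?_, hg, hgi, ?_⟩
  · intro a ha a' ha' he
    exact hM.inj a a' (f a) (hf a ha) (he ▸ hf a' ha')
  · intro a ha b hb hab
    exact ha.2 (hb.2 a ha.1 hab)

/-- The `N`-neighbourhood of `b` in `A`. -/
def nbr {V : Type*} (N : V → V → Prop) (A : Set V) (b : V) : Set V := {a ∈ A | N a b}

theorem Ferrers.nbr_total {V : Type*} {N : V → V → Prop} {A B : Set V} (h : Ferrers N A B)
    {b b' : V} (hb : b ∈ B) (hb' : b' ∈ B) (hn : ¬ nbr N A b' ⊆ nbr N A b) :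
    nbr N A b ⊆ nbr N A b' := by
  obtain ⟨a', ha', hna'⟩ := Set.not_subset.1 hn
  intro a ha
  refine ⟨ha.1, ?_⟩
  rcases h a ha.1 a' ha'.1 b hb b' hb' ha.2 ha'.2 with h1 | h1
  · exact h1
  · exact absurd ⟨ha'.1, h1⟩ hna'

theorem le_mk_sdiff {V : Type*} {κ : Cardinal} (hκ : ℵ₀ ≤ κ) {S T : Set V} (hS : κ ≤ #S)
    (hT : #T < κ) : κ ≤ #(S \ T : Set V) := by
  by_contra h
  exact (hS.trans (Cardinal.le_mk_sdiff_add_mk S T)).not_gt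
    (Cardinal.add_lt_of_lt hκ (not_le.1 h) hT)

/-- A matching of fewer than `κ` elements extends greedily to elements with at least `κ`
neighbours. -/
theorem Matchable.extend {V : Type*} {N : V → V → Prop} {A B B₀ : Set V} {κ : Cardinal}
    (hκ : ℵ₀ ≤ κ) (hB : #B ≤ κ) (hlt : #B₀ < κ) (h : Matchable N A B₀)
    (hbig : ∀ b ∈ B \ B₀, κ ≤ #(nbr N A b)) : Matchable N A B := by
  classical
  obtain ⟨g₀, hg₀, hi₀⟩ := h
  obtain ⟨g₁, hg₁, hi₁⟩ := exists_greedy (κ := κ) (B \ B₀)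
    ((Cardinal.mk_le_mk_of_subset Set.sdiff_subset).trans hB) (fun b => nbr N A b \ g₀ '' B₀)
    (fun b hb => le_mk_sdiff hκ (hbig b hb) (Cardinal.mk_image_le.trans_lt hlt))
  refine ⟨fun b => if b ∈ B₀ then g₀ b else g₁ b, ?_, ?_⟩
  · intro b hb
    by_cases h0 : b ∈ B₀
    · simp only [h0, if_true]
      exact hg₀ b h0
    · simp only [h0, if_false]
      exact (hg₁ b ⟨hb, h0⟩).1
  · intro b hb b' hb' he
    by_cases h0 : b ∈ B₀ <;> by_cases h0' : b' ∈ B₀ <;>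
      simp only [h0, h0', if_true, if_false] at he
    · exact hi₀ h0 h0' he
    · exact absurd ⟨b, h0, he⟩ (hg₁ b' ⟨hb', h0'⟩).2
    · exact absurd ⟨b', h0', he.symm⟩ (hg₁ b ⟨hb, h0⟩).2
    · exact hi₁ ⟨hb, h0⟩ ⟨hb', h0'⟩ he

theorem Waveless.matchable_finite {V : Type*} {N : V → V → Prop} {A B : Set V}
    (hF : Ferrers N A B) (hW : Waveless N A B) (hB : B.Finite)
    (IH : ∀ A' ⊆ A, ∀ B' ⊂ B, Split N A' B') : Matchable N A B := by
  classical
  rcases B.eq_empty_or_nonempty with rfl | hne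
  · exact ⟨id, by simp, by simp⟩
  obtain ⟨b₀, hb₀, hmin⟩ := Set.Finite.exists_minimalFor (nbr N A) B hB hne
  have hsub : ∀ b ∈ B, nbr N A b₀ ⊆ nbr N A b := by
    intro b hb
    by_cases h : nbr N A b ⊆ nbr N A b₀
    · exact hmin hb h
    · exact hF.nbr_total hb₀ hb h
  obtain ⟨a₀, ha₀, hab₀⟩ := hW.exists_nbr b₀ hb₀
  obtain ⟨A₁, hA₁, B₁, hB₁, f, g, hf, hfi, hg, hgi, hcl⟩ :=
    IH (A \ {a₀}) Set.sdiff_subset (B \ {b₀}) (Set.sdiff_singleton_ssubset.2 hb₀)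
  rcases B₁.eq_empty_or_nonempty with rfl | ⟨b₁, hb₁⟩
  · refine ⟨fun b => if b = b₀ then a₀ else g b, ?_, ?_⟩
    · intro b hb
      by_cases h : b = b₀
      · subst h
        simpa using ⟨ha₀, hab₀⟩
      · simp only [h, if_false]
        have := hg b ⟨⟨hb, h⟩, by simp⟩
        exact ⟨this.1.1.1, this.2⟩
    · intro b hb b' hb' he
      by_cases h : b = b₀ <;> by_cases h' : b' = b₀ <;> simp only [h, h', if_true, if_false] at he
      · rw [h, h']
      · exact absurd he.symm (hg b' ⟨⟨hb', h'⟩, by simp⟩).1.1.2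
      · exact absurd he (hg b ⟨⟨hb, h⟩, by simp⟩).1.1.2
      · exact hgi ⟨⟨hb, h⟩, by simp⟩ ⟨⟨hb', h'⟩, by simp⟩ he
  -- The neighbourhood of `b₀` lies in that of any `b₁ ∈ B₁`, so adding the pair `(a₀, b₀)` to
  -- the matching `f` yields a nonempty wave.
  · exfalso
    have hdom : ∀ b ∈ B₁, ∀ a ∈ A, N a b → a ∈ A₁ ∨ a = a₀ := by
      intro b hb a ha hab
      by_contra h
      push Not at h
      exact hcl a ⟨⟨ha, h.2⟩, h.1⟩ b hb hab
    have hM := hW.eq_empty {p | (p.1 ∈ A₁ ∧ p.2 = f p.1) ∨ p = (a₀, b₀)}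
      { mem := by
          rintro a b (⟨ha, rfl : b = f a⟩ | h)
          · exact ⟨(hA₁ ha).1, (hB₁ (hf a ha).1).1, (hf a ha).2⟩
          · obtain ⟨rfl, rfl⟩ := Prod.mk.inj h
            exact ⟨ha₀, hb₀, hab₀⟩
        inj := by
          rintro a a' b (⟨ha, hb : b = f a⟩ | h) (⟨ha', hb' : b = f a'⟩ | h')
          · exact hfi ha ha' (hb.symm.trans hb')
          · exact absurd (hb.symm.trans (Prod.mk.inj h').2) (hB₁ (hf a ha).1).2
          · exact absurd (hb'.symm.trans (Prod.mk.inj h).2) (hB₁ (hf a' ha').1).2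
          · exact (Prod.mk.inj h).1.trans (Prod.mk.inj h').1.symm
        closed := by
          intro a b hab a' ha' hn
          have h1 : a' ∈ A₁ ∨ a' = a₀ := by
            rcases hab with ⟨ha, rfl : b = f a⟩ | h
            · exact hdom _ (hf a ha).1 a' ha' hn
            · obtain ⟨rfl, rfl⟩ := Prod.mk.inj h
              exact hdom b₁ hb₁ a' ha' (hsub b₁ (hB₁ hb₁).1 ⟨ha', hn⟩).2
          rcases h1 with h1 | rfl
          · exact ⟨f a', Or.inl ⟨h1, rfl⟩⟩
          · exact ⟨b₀, Or.inr rfl⟩ }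
    have : (a₀, b₀) ∈ {p : V × V | (p.1 ∈ A₁ ∧ p.2 = f p.1) ∨ p = (a₀, b₀)} := Or.inr rfl
    rw [hM] at this
    exact this

/-- The infinite case of the matching theorem. Here `D b` consists of the elements of `B` whose
neighbourhood lies in that of `b`, and `I` of the `b` for which `D b` is smaller than `κ`; both
are matched by the induction hypothesis when they are small, and the rest is matched greedily. -/
theorem Waveless.matchable_infinite {V : Type*} {N : V → V → Prop} {A B : Set V}
    (hF : Ferrers N A B) (hW : Waveless N A B) {κ : Cardinal} (hκ : ℵ₀ ≤ κ) (hB : #B ≤ κ)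
    (IH : ∀ A' ⊆ A, ∀ B' ⊆ B, #A' < κ ∨ #B' < κ → Split N A' B') : Matchable N A B := by
  classical
  let D : V → Set V := fun b => {b' ∈ B | nbr N A b' ⊆ nbr N A b}
  let I : Set V := {b ∈ B | #(D b) < κ}
  have hD : ∀ b, D b ⊆ B := fun b x hx => hx.1
  have hnA : ∀ b, nbr N A b ⊆ A := fun b x hx => hx.1
  have hI : I ⊆ B := fun b hb => hb.1
  have hWD : ∀ b, Waveless N (nbr N A b) (D b) := fun b =>
    hW.sub (hnA b) (hD b) fun b' hb' a ha hab => hb'.2 ⟨ha, hab⟩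
  let A' : Set V := ⋃ b ∈ I, nbr N A b
  have hA' : A' ⊆ A := Set.iUnion₂_subset fun b _ => hnA b
  have hmemA' : ∀ b ∈ I, ∀ a ∈ A, N a b → a ∈ A' := fun b hb a ha hab =>
    Set.mem_biUnion hb (show a ∈ nbr N A b from ⟨ha, hab⟩)
  by_cases hIκ : #I < κ
  -- If `I` is small, a vertex outside `I` has at least `κ` neighbours: otherwise its set `D b`,
  -- of size `κ`, would be matched into its neighbourhood.
  · obtain ⟨g, hg, hgi⟩ := (hW.sub hA' hI hmemA').matchable (IH A' hA' I hI (Or.inr hIκ))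
    refine Matchable.extend hκ hB hIκ ⟨g, fun b hb => ⟨hA' (hg b hb).1, (hg b hb).2⟩, hgi⟩ ?_
    rintro b ⟨hb, hbI⟩
    by_contra hlt
    obtain ⟨h, hh, hhi⟩ := (hWD b).matchable (IH _ (hnA b) _ (hD b) (Or.inl (not_le.1 hlt)))
    refine hbI ⟨hb, ?_⟩
    rw [← Cardinal.mk_image_eq_of_injOn h (D b) hhi]
    refine (Cardinal.mk_le_mk_of_subset ?_).trans_lt (not_le.1 hlt)
    rintro _ ⟨x, hx, rfl⟩
    exact (hh x hx).1
  have hIκ := not_lt.1 hIκ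
  by_cases hbig : ∃ b₀ ∈ I, κ ≤ #(nbr N A b₀)
  · obtain ⟨b₀, hb₀, hle⟩ := hbig
    obtain ⟨g, hg, hgi⟩ := (hWD b₀).matchable (IH _ (hnA b₀) _ (hD b₀) (Or.inr hb₀.2))
    refine Matchable.extend hκ hB hb₀.2
      ⟨g, fun b hb => ⟨hnA _ (hg b hb).1, (hg b hb).2⟩, hgi⟩ ?_
    rintro b ⟨hb, hbD⟩
    refine hle.trans (Cardinal.mk_le_mk_of_subset ?_)
    exact hF.nbr_total hb₀.1 hb fun h => hbD ⟨hb, h⟩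
  -- Otherwise `A'` has size at most `κ`, and each of its vertices has `κ` neighbours in `I`;
  -- a greedy matching of `A'` into `I` is then a nonempty wave.
  · exfalso
    push Not at hbig
    have hA'κ : #A' ≤ κ := by
      refine (Cardinal.mk_biUnion_le _ _).trans ?_
      calc #I * ⨆ b : I, #(nbr N A b.1) ≤ κ * κ := by
            refine mul_le_mul' ((Cardinal.mk_le_mk_of_subset hI).trans hB) ?_
            exact ciSup_le' fun b => (hbig b.1 b.2).le
        _ = κ := Cardinal.mul_eq_self hκ
    obtain ⟨h, hh, hhi⟩ := exists_greedy (κ := κ) A' hA'κ (fun a => {b ∈ I | N a b}) (by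
      intro a ha
      obtain ⟨b, hb, hab⟩ := Set.mem_iUnion₂.1 ha
      refine (le_mk_sdiff hκ hIκ hb.2).trans (Cardinal.mk_le_mk_of_subset ?_)
      rintro b' ⟨hb', hbD⟩
      exact ⟨hb', (hF.nbr_total hb.1 hb'.1 (fun h => hbD ⟨hb'.1, h⟩) hab).2⟩)
    have hM := hW.eq_empty {p | p.1 ∈ A' ∧ p.2 = h p.1}
      { mem := by
          rintro a b ⟨ha, rfl : b = h a⟩
          exact ⟨hA' ha, hI (hh a ha).1, (hh a ha).2⟩
        inj := by
          rintro a a' b ⟨ha, hb : b = h a⟩ ⟨ha', hb' : b = h a'⟩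
          exact hhi ha ha' (hb.symm.trans hb')
        closed := by
          rintro a b ⟨ha, rfl : b = h a⟩ a' ha' hn
          exact ⟨h a', hmemA' _ (hh a ha).1 a' ha' hn, rfl⟩ }
    obtain ⟨b, hb⟩ : I.Nonempty := by
      rw [Set.nonempty_iff_ne_empty]
      intro h0
      rw [h0, Cardinal.mk_eq_zero] at hIκ
      exact (Cardinal.aleph0_pos.trans_le hκ).not_ge hIκ
    obtain ⟨a, ha, hab⟩ := hW.exists_nbr b hb.1
    have : (a, h a) ∈ {p : V × V | p.1 ∈ A' ∧ p.2 = h p.1} := ⟨hmemA' b hb a ha hab, rfl⟩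
    rw [hM] at this
    exact this

/-- Every Ferrers relation, of any cardinality, has a split, by induction on the cardinality of `B`.
The statement is symmetric in `A` and `B`, so the induction hypothesis applies as soon as one of
the two sides is small. -/
theorem exists_split {V : Type*} {N : V → V → Prop} {A B : Set V} (hF : Ferrers N A B) :
    Split N A B := by
  have key : ∀ κ : Cardinal, ∀ (N : V → V → Prop) (A B : Set V), Ferrers N A B → #B ≤ κ →
      Split N A B := by
    intro κ
    induction κ using WellFoundedLT.induction with
    | ind κ IH =>
      intro N A B hF hB
      have IH' : ∀ A' ⊆ A, ∀ B' ⊆ B, #A' < κ ∨ #B' < κ → Split N A' B' := by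
        rintro A' hA' B' hB' (h | h)
        · exact .of_flip (IH _ h _ _ _ (hF.mono hA' hB').flip le_rfl)
        · exact IH _ h _ _ _ (hF.mono hA' hB') le_rfl
      refine Split.of_waveless fun A' hA' B' hB' hW => ?_
      have hB'κ : #B' ≤ κ := (Cardinal.mk_le_mk_of_subset hB').trans hB
      rcases lt_or_ge κ ℵ₀ with hκ | hκ
      · have hfin : B'.Finite := Cardinal.lt_aleph0_iff_set_finite.1 (hB'κ.trans_lt hκ)
        refine hW.matchable_finite (hF.mono hA' hB') hfin fun A'' hA'' B'' hB'' => ?_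
        refine IH' _ (hA''.trans hA') _ (hB''.subset.trans hB') (Or.inr ?_)
        refine lt_of_lt_of_le ?_ hB'κ
        have h2 := Set.ncard_lt_ncard hB'' hfin
        rw [← Set.cast_ncard hfin, ← Set.cast_ncard (hfin.subset hB''.subset)]
        exact_mod_cast h2
      · exact hW.matchable_infinite (hF.mono hA' hB') hκ hB'κ fun A'' hA'' B'' hB'' =>
          IH' _ (hA''.trans hA') _ (hB''.trans hB')
  exact key _ N A B hF le_rfl

/-! ### Retractions onto cliques -/

/-- A retraction of `S` onto a clique: the fibres of `f` on `S` are independent sets and its image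
is a clique meeting each fibre in the fixed point of that fibre. -/
def Retracts {V : Type*} (G : SimpleGraph V) (S : Set V) : Prop :=
  ∃ f : V → V, (∀ x ∈ S, f x ∈ S) ∧ (∀ x ∈ S, f (f x) = f x) ∧
    (∀ x ∈ S, ∀ y ∈ S, f x ≠ f y → G.Adj (f x) (f y)) ∧
    ∀ x ∈ S, ∀ y ∈ S, G.Adj x y → f x ≠ f y

theorem Retracts.partition {V : Type*} {G : SimpleGraph V} {W : Set V} (h : Retracts G W) :
    ∃ (D : Set (Set V)) (K : Set V), K ⊆ W ∧ G.IsClique K ∧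
      (∀ T ∈ D, T ⊆ W ∧ IsIndepSet' G T) ∧ D.PairwiseDisjoint id ∧ ⋃₀ D = W ∧
      ∀ T ∈ D, (T ∩ K).Nonempty := by
  obtain ⟨f, hmap, hidem, hcl, hcol⟩ := h
  refine ⟨(fun k => {x ∈ W | f x = k}) '' (f '' W), f '' W, ?_, ?_, ?_, ?_, ?_, ?_⟩
  · rintro _ ⟨x, hx, rfl⟩
    exact hmap x hx
  · rintro _ ⟨x, hx, rfl⟩ _ ⟨y, hy, rfl⟩ hne
    exact hcl x hx y hy hne
  · rintro _ ⟨k, -, rfl⟩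
    refine ⟨fun x hx => hx.1, fun x hx y hy _ hxy => hcol x hx.1 y hy.1 hxy ?_⟩
    rw [hx.2, hy.2]
  · rintro _ ⟨k, -, rfl⟩ _ ⟨k', -, rfl⟩ hne
    rw [Function.onFun, Set.disjoint_left]
    rintro x ⟨-, hx⟩ ⟨-, hx'⟩
    exact hne (by rw [← hx, ← hx'])
  · ext x
    constructor
    · rintro ⟨_, ⟨k, -, rfl⟩, hx⟩
      exact hx.1
    · intro hx
      exact ⟨_, ⟨f x, ⟨x, hx, rfl⟩, rfl⟩, hx, rfl⟩
  · rintro _ ⟨_, ⟨x, hx, rfl⟩, rfl⟩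
    exact ⟨f x, ⟨hmap x hx, hidem x hx⟩, x, hx, rfl⟩

theorem exists_injOn_of_embedding {V : Type*} {s t : Set V} (e : s ↪ t) :
    ∃ g : V → V, (∀ x ∈ s, g x ∈ t) ∧ Set.InjOn g s := by
  classical
  refine ⟨fun x => if h : x ∈ s then e ⟨x, h⟩ else x, ?_, ?_⟩
  · intro x hx
    simp [hx]
  · intro x hx y hy hxy
    simp only [hx, hy, dif_pos] at hxy
    simpa using e.injective (Subtype.ext hxy)

/-- Gluing along the clique `S₁ ∩ S₂` when the colours of `S₁` not used on the intersection inject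
into those of `S₂`: recolour `S₁` by the colours of `S₂`. -/
theorem Retracts.glue_aux {V : Type*} {G : SimpleGraph V} {S₁ S₂ : Set V} {f₁ f₂ : V → V}
    (c₁ : ∀ x ∈ S₁, ∀ y ∈ S₁, G.Adj x y → f₁ x ≠ f₁ y)
    (m₂ : ∀ x ∈ S₂, f₂ x ∈ S₂) (i₂ : ∀ x ∈ S₂, f₂ (f₂ x) = f₂ x)
    (k₂ : ∀ x ∈ S₂, ∀ y ∈ S₂, f₂ x ≠ f₂ y → G.Adj (f₂ x) (f₂ y))
    (c₂ : ∀ x ∈ S₂, ∀ y ∈ S₂, G.Adj x y → f₂ x ≠ f₂ y)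
    (hR : G.IsClique (S₁ ∩ S₂))
    (hsep : ∀ x ∈ S₁, ∀ y ∈ S₂, G.Adj x y → x ∈ S₂ ∨ y ∈ S₁)
    (e : ({k | k ∈ f₁ '' S₁ ∧ ∀ r ∈ S₁ ∩ S₂, f₁ r ≠ k} : Set V) ↪
      ({k | k ∈ f₂ '' S₂ ∧ ∀ r ∈ S₁ ∩ S₂, f₂ r ≠ k} : Set V)) :
    Retracts G (S₁ ∪ S₂) := by
  classical
  obtain ⟨ι, hι, hιinj⟩ := exists_injOn_of_embedding e
  have inj₁ : ∀ r ∈ S₁ ∩ S₂, ∀ r' ∈ S₁ ∩ S₂, f₁ r = f₁ r' → r = r' := by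
    intro r hr r' hr' h
    by_contra hne
    exact c₁ r hr.1 r' hr'.1 (hR hr hr' hne) h
  have inj₂ : ∀ r ∈ S₁ ∩ S₂, ∀ r' ∈ S₁ ∩ S₂, f₂ r = f₂ r' → r = r' := by
    intro r hr r' hr' h
    by_contra hne
    exact c₂ r hr.2 r' hr'.2 (hR hr hr' hne) h
  obtain ⟨h, hhR, hhI⟩ : ∃ h : V → V, (∀ r ∈ S₁ ∩ S₂, h (f₁ r) = f₂ r) ∧
      ∀ k, (∀ r ∈ S₁ ∩ S₂, f₁ r ≠ k) → h k = ι k := by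
    refine ⟨fun k => if hk : ∃ r ∈ S₁ ∩ S₂, f₁ r = k then f₂ hk.choose else ι k, ?_, ?_⟩
    · intro r hr
      have hk : ∃ r' ∈ S₁ ∩ S₂, f₁ r' = f₁ r := ⟨r, hr, rfl⟩
      simp only [hk, dif_pos]
      rw [inj₁ _ hk.choose_spec.1 r hr hk.choose_spec.2]
    · intro k hk
      refine dif_neg ?_
      rintro ⟨r, hr, hrk⟩
      exact hk r hr hrk
  have himg : ∀ x ∈ S₁, h (f₁ x) ∈ f₂ '' S₂ := by
    intro x hx
    by_cases hk : ∃ r ∈ S₁ ∩ S₂, f₁ r = f₁ x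
    · obtain ⟨r, hr, hrx⟩ := hk
      rw [← hrx, hhR r hr]
      exact ⟨r, hr.2, rfl⟩
    · push Not at hk
      rw [hhI _ hk]
      exact (hι _ ⟨⟨x, hx, rfl⟩, hk⟩).1
  have hinj : ∀ x ∈ S₁, ∀ y ∈ S₁, h (f₁ x) = h (f₁ y) → f₁ x = f₁ y := by
    intro x hx y hy hxy
    by_cases hk : ∃ r ∈ S₁ ∩ S₂, f₁ r = f₁ x <;> by_cases hl : ∃ r ∈ S₁ ∩ S₂, f₁ r = f₁ y
    · obtain ⟨r, hr, hrx⟩ := hk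
      obtain ⟨s, hs, hsy⟩ := hl
      rw [← hrx, ← hsy, hhR r hr, hhR s hs] at hxy
      rw [← hrx, ← hsy, inj₂ r hr s hs hxy]
    · obtain ⟨r, hr, hrx⟩ := hk
      push Not at hl
      rw [← hrx, hhR r hr, hhI _ hl] at hxy
      exact absurd hxy ((hι _ ⟨⟨y, hy, rfl⟩, hl⟩).2 r hr)
    · obtain ⟨s, hs, hsy⟩ := hl
      push Not at hk
      rw [← hsy, hhR s hs, hhI _ hk] at hxy
      exact absurd hxy.symm ((hι _ ⟨⟨x, hx, rfl⟩, hk⟩).2 s hs)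
    · push Not at hk hl
      rw [hhI _ hk, hhI _ hl] at hxy
      exact hιinj ⟨⟨x, hx, rfl⟩, hk⟩ ⟨⟨y, hy, rfl⟩, hl⟩ hxy
  let g : V → V := fun x => if x ∈ S₂ then f₂ x else h (f₁ x)
  have g2 : ∀ x ∈ S₂, g x = f₂ x := fun x hx => if_pos hx
  have g1 : ∀ x ∈ S₁, g x = h (f₁ x) := by
    intro x hx
    by_cases hx2 : x ∈ S₂
    · rw [g2 x hx2, hhR x ⟨hx, hx2⟩]
    · exact if_neg hx2
  have gimg : ∀ x ∈ S₁ ∪ S₂, ∃ z ∈ S₂, f₂ z = g x := by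
    rintro x (hx | hx)
    · rw [g1 x hx]
      exact himg x hx
    · rw [g2 x hx]
      exact ⟨x, hx, rfl⟩
  have gS : ∀ x ∈ S₁ ∪ S₂, g x ∈ S₂ := by
    intro x hx
    obtain ⟨z, hz, hzx⟩ := gimg x hx
    rw [← hzx]
    exact m₂ z hz
  refine ⟨g, fun x hx => Or.inr (gS x hx), ?_, ?_, ?_⟩
  · intro x hx
    rw [g2 _ (gS x hx)]
    obtain ⟨z, hz, hzx⟩ := gimg x hx
    rw [← hzx, i₂ z hz]
  · intro x hx y hy hne
    obtain ⟨z, hz, hzx⟩ := gimg x hx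
    obtain ⟨z', hz', hzy⟩ := gimg y hy
    rw [← hzx, ← hzy] at hne ⊢
    exact k₂ z hz z' hz' hne
  · have both2 : ∀ x ∈ S₂, ∀ y ∈ S₂, G.Adj x y → g x ≠ g y := by
      intro x hx y hy hxy
      rw [g2 x hx, g2 y hy]
      exact c₂ x hx y hy hxy
    have both1 : ∀ x ∈ S₁, ∀ y ∈ S₁, G.Adj x y → g x ≠ g y := by
      intro x hx y hy hxy he
      rw [g1 x hx, g1 y hy] at he
      exact c₁ x hx y hy hxy (hinj x hx y hy he)
    rintro x (hx | hx) y (hy | hy) hxy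
    · exact both1 x hx y hy hxy
    · rcases hsep x hx y hy hxy with h | h
      · exact both2 x h y hy hxy
      · exact both1 x hx y h hxy
    · rcases hsep y hy x hx hxy.symm with h | h
      · exact both2 x hx y h hxy
      · exact both1 x h y hy hxy
    · exact both2 x hx y hy hxy

/-- Clique sums preserve retractability, since the sets of colours unused on the intersection are
comparable in cardinality. -/
theorem Retracts.glue {V : Type*} {G : SimpleGraph V} {S₁ S₂ : Set V}
    (h₁ : Retracts G S₁) (h₂ : Retracts G S₂) (hR : G.IsClique (S₁ ∩ S₂))
    (hsep : ∀ x ∈ S₁, ∀ y ∈ S₂, G.Adj x y → x ∈ S₂ ∨ y ∈ S₁) :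
    Retracts G (S₁ ∪ S₂) := by
  obtain ⟨f₁, m₁, i₁, k₁, c₁⟩ := h₁
  obtain ⟨f₂, m₂, i₂, k₂, c₂⟩ := h₂
  rcases Function.Embedding.total
    ({k | k ∈ f₁ '' S₁ ∧ ∀ r ∈ S₁ ∩ S₂, f₁ r ≠ k} : Set V)
    ({k | k ∈ f₂ '' S₂ ∧ ∀ r ∈ S₁ ∩ S₂, f₂ r ≠ k} : Set V) with ⟨⟨e⟩⟩ | ⟨⟨e⟩⟩
  · exact Retracts.glue_aux c₁ m₂ i₂ k₂ c₂ hR hsep e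
  · rw [Set.union_comm]
    rw [Set.inter_comm] at hR e
    exact Retracts.glue_aux c₂ m₁ i₁ k₁ c₁ hR (fun x hx y hy hxy =>
      (hsep y hy x hx hxy.symm).symm) e

/-- The union of two disjoint cliques: chordality makes non-adjacency between them a Ferrers relation,
and a split of it pairs off vertices of `A₁` and of `B \ B₁` with non-neighbours, leaving the
clique `(A \ A₁) ∪ B₁`. -/
theorem Retracts.of_two_cliques {V : Type*} {G : SimpleGraph V} (hG : IsChordal G) {A B : Set V}
    (hA : G.IsClique A) (hB : G.IsClique B) (hAB : Disjoint A B) : Retracts G (A ∪ B) := by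
  classical
  have hF : Ferrers (fun a b => ¬ G.Adj a b) A B := by
    intro a ha a' ha' b hb b' hb' hab hab'
    by_contra hcon
    push Not at hcon
    have hne : ∀ x ∈ A, ∀ y ∈ B, x ≠ y := fun x hx y hy e => Set.disjoint_left.1 hAB hx (e ▸ hy)
    have haa : a ≠ a' := fun e => hab (e ▸ hcon.2)
    have hbb : b ≠ b' := fun e => hab' (e ▸ hcon.2)
    exact hab' (common_nbr_adj hG hab (hne a ha b hb).symm (hA ha ha' haa) hcon.1
      hcon.2.symm (hB hb hb' hbb) (hne a' ha' b' hb'))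
  obtain ⟨A₁, hA₁, B₁, hB₁, f, g, hf, hfi, hg, hgi, hcl⟩ := exists_split hF
  let F : V → V := fun x => if x ∈ A₁ then f x else if x ∈ B \ B₁ then g x else x
  have hd : ∀ x ∈ A, x ∉ B := fun x hx => Set.disjoint_left.1 hAB hx
  have F1 : ∀ x ∈ A₁, F x = f x := fun x hx => if_pos hx
  have F2 : ∀ x ∈ B \ B₁, F x = g x := fun x hx => by
    simp only [F]
    rw [if_neg fun h => hd x (hA₁ h) hx.1, if_pos hx]
  have F3 : ∀ x ∈ A \ A₁, F x = x := fun x hx => by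
    simp only [F]
    rw [if_neg hx.2, if_neg fun h => hd x hx.1 h.1]
  have F4 : ∀ x ∈ B₁, F x = x := fun x hx => by
    simp only [F]
    rw [if_neg fun h => hd x (hA₁ h) (hB₁ hx), if_neg fun h => h.2 hx]
  have hcases : ∀ x ∈ A ∪ B, x ∈ A₁ ∨ x ∈ B \ B₁ ∨ x ∈ A \ A₁ ∨ x ∈ B₁ := by
    intro x hx
    by_cases h1 : x ∈ A₁
    · exact Or.inl h1
    by_cases h2 : x ∈ B₁
    · exact Or.inr (Or.inr (Or.inr h2))
    rcases hx with hx | hx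
    · exact Or.inr (Or.inr (Or.inl ⟨hx, h1⟩))
    · exact Or.inr (Or.inl ⟨hx, h2⟩)
  have himg : ∀ x ∈ A ∪ B, F x ∈ A \ A₁ ∨ F x ∈ B₁ := by
    intro x hx
    rcases hcases x hx with h | h | h | h
    · rw [F1 x h]; exact Or.inr (hf x h).1
    · rw [F2 x h]; exact Or.inl (hg x h).1
    · rw [F3 x h]; exact Or.inl h
    · rw [F4 x h]; exact Or.inr h
  refine ⟨F, ?_, ?_, ?_, ?_⟩
  · intro x hx
    rcases himg x hx with h | h
    · exact Or.inl h.1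
    · exact Or.inr (hB₁ h)
  · intro x hx
    rcases himg x hx with h | h
    · exact F3 _ h
    · exact F4 _ h
  · intro x hx y hy hne
    rcases himg x hx with h | h <;> rcases himg y hy with k | k
    · exact hA h.1 k.1 hne
    · exact not_not.1 (hcl _ h _ k)
    · exact (not_not.1 (hcl _ k _ h)).symm
    · exact hB (hB₁ h) (hB₁ k) hne
  -- Each colour class is a single vertex or a non-adjacent pair matched by `f` or `g`.
  · have hAA : ∀ x ∈ A, ∀ y ∈ A, x ≠ y → F x ≠ F y := by
      intro x hx y hy hne he
      by_cases h : x ∈ A₁ <;> by_cases h' : y ∈ A₁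
      · rw [F1 x h, F1 y h'] at he
        exact hne (hfi h h' he)
      · rw [F1 x h, F3 y ⟨hy, h'⟩] at he
        exact hd y hy (he ▸ hB₁ (hf x h).1)
      · rw [F3 x ⟨hx, h⟩, F1 y h'] at he
        exact hd x hx (he ▸ hB₁ (hf y h').1)
      · rw [F3 x ⟨hx, h⟩, F3 y ⟨hy, h'⟩] at he
        exact hne he
    have hBB : ∀ x ∈ B, ∀ y ∈ B, x ≠ y → F x ≠ F y := by
      intro x hx y hy hne he
      by_cases h : x ∈ B₁ <;> by_cases h' : y ∈ B₁
      · rw [F4 x h, F4 y h'] at he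
        exact hne he
      · rw [F4 x h, F2 y ⟨hy, h'⟩] at he
        exact hd _ (hg y ⟨hy, h'⟩).1.1 (he ▸ hx)
      · rw [F2 x ⟨hx, h⟩, F4 y h'] at he
        exact hd _ (hg x ⟨hx, h⟩).1.1 (he ▸ hy)
      · rw [F2 x ⟨hx, h⟩, F2 y ⟨hy, h'⟩] at he
        exact hne (hgi ⟨hx, h⟩ ⟨hy, h'⟩ he)
    have hABne : ∀ x ∈ A, ∀ y ∈ B, G.Adj x y → F x ≠ F y := by
      intro x hx y hy hxy he
      by_cases h : x ∈ A₁ <;> by_cases h' : y ∈ B₁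
      · rw [F1 x h, F4 y h'] at he
        exact (hf x h).2 (he ▸ hxy)
      · rw [F1 x h, F2 y ⟨hy, h'⟩] at he
        exact hd _ (hg y ⟨hy, h'⟩).1.1 (he ▸ hB₁ (hf x h).1)
      · rw [F3 x ⟨hx, h⟩, F4 y h'] at he
        exact hd x hx (he ▸ hy)
      · rw [F3 x ⟨hx, h⟩, F2 y ⟨hy, h'⟩] at he
        exact (hg y ⟨hy, h'⟩).2 (he ▸ hxy)
    rintro x (hx | hx) y (hy | hy) hxy
    · exact hAA x hx y hy hxy.ne
    · exact hABne x hx y hy hxy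
    · exact (hABne y hy x hx hxy.symm).symm
    · exact hBB x hx y hy hxy.ne

/-- A (possibly infinite) chordal graph all of whose independent sets are finite is
strongly perfect. -/
theorem chordal_stronglyPerfect {V : Type*} (G : SimpleGraph V)
    (hchordal : IsChordal G)
    (hfin : ∀ S : Set V, IsIndepSet' G S → S.Finite) :
    IsStronglyPerfect G := by
  intro W
  obtain ⟨n, lam, hn, hadj, hquad⟩ := exists_global_layering hchordal hfin
  have key : ∀ m, Retracts G {x ∈ W | lam x < m} := by
    intro m
    induction m with
    | zero => exact ⟨id, by simp, by simp, by simp, by simp⟩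
    | succ m ih =>
      set S := {x ∈ W | lam x < m} with hS
      set Q := {x ∈ W | lam x = m} with hQ
      set R := {u ∈ S | ∃ w ∈ Q, G.Adj u w} with hR
      have hQcl : G.IsClique Q := fun x hx y hy hne => hadj x y (hx.2.trans hy.2.symm) hne
      have hRcl : G.IsClique R := by
        rintro u ⟨hu, w, hw, huw⟩ u' ⟨hu', w', hw', huw'⟩ hne
        have h1 : lam u < m := hu.2
        have h2 : lam u' < m := hu'.2
        have h3 : lam w = m := hw.2
        have h4 : lam w' = m := hw'.2
        exact hquad w w' u u' (by omega) (by omega) (by omega) huw huw' hne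
      have hSQ : ∀ x ∈ S, x ∉ Q := fun x hx hxQ => hx.2.ne hxQ.2
      have hRQ : Retracts G (R ∪ Q) := Retracts.of_two_cliques hchordal hRcl hQcl
        (Set.disjoint_left.2 fun x hx => hSQ x hx.1)
      have hinter : S ∩ (R ∪ Q) ⊆ R := by
        rintro x ⟨hx, hx' | hx'⟩
        · exact hx'
        · exact absurd hx' (hSQ x hx)
      have hglue := ih.glue hRQ (hRcl.subset hinter) (by
        rintro x hx y (hy | hy) hxy
        · exact Or.inr hy.1
        · exact Or.inl (Or.inl ⟨hx, y, hy, hxy⟩))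
      have heq : {x ∈ W | lam x < m + 1} = S ∪ (R ∪ Q) := by
        ext x
        constructor
        · rintro ⟨hx, hlt⟩
          rcases Nat.lt_succ_iff_lt_or_eq.1 hlt with h | h
          · exact Or.inl ⟨hx, h⟩
          · exact Or.inr (Or.inr ⟨hx, h⟩)
        · rintro (hx | hx | hx)
          · exact ⟨hx.1, hx.2.trans (Nat.lt_succ_self _)⟩
          · exact ⟨hx.1.1, hx.1.2.trans (Nat.lt_succ_self _)⟩
          · exact ⟨hx.1, by rw [hx.2]; exact Nat.lt_succ_self _⟩
      rw [heq]
      exact hglue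
  have hW : {x ∈ W | lam x < n + 1} = W := by
    ext x
    exact ⟨fun h => h.1, fun h => ⟨h, Nat.lt_succ_of_le (hn x)⟩⟩
  have := key (n + 1)
  rw [hW] at this
  exact this.partition
end

section
/- Let G be a (possibly infinite) simple graph whose complement is chordal, and suppose every independent set of vertices of G is finite. Then G is strongly perfect: for every induced subgraph H of G there exist a partition of the vertices of H into independent sets and a clique of H meeting every independent set of the partition. -/
universe u

/-- `Near H x y`: the vertices `x` and `y` are equal or adjacent, i.e. `y` lies in the closed
neighbourhood of `x`. -/
def Near {X : Type*} (H : SimpleGraph X) (x y : X) : Prop := x = y ∨ H.Adj x y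

lemma Near.symm {X : Type*} {H : SimpleGraph X} {x y : X} (h : Near H x y) : Near H y x :=
  h.elim (fun h => .inl h.symm) (fun h => .inr h.symm)

/-! ### Common neighbours from chordality -/

/-- In a chordal graph, a walk avoiding `s` and `t` and joining a neighbour of `t` to a neighbour
of `s`, where `s ∼ t`, contains a common neighbour of `s` and `t`: otherwise a shortest such
walk on the same vertex set closes up to a chordless cycle. -/
lemma exists_common_neighbor {X : Type*} {H : SimpleGraph X} (hH : IsChordal H) {s t : X}
    (hst : H.Adj s t) {Y : Set X} (hs : s ∉ Y) (ht : t ∉ Y) :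
    ∀ (n : ℕ) (a b : X) (p : H.Walk a b), p.length = n → (∀ x ∈ p.support, x ∈ Y) →
      H.Adj t a → H.Adj b s → ∃ x ∈ Y, H.Adj x s ∧ H.Adj x t := by
  classical
  intro n
  induction n using Nat.strong_induction_on with
  | _ n ih =>
  intro a b p hn hY hta hbs
  by_cases hab : a = b
  · subst hab
    exact ⟨a, hY a p.start_mem_support, hbs, hta.symm⟩
  by_cases hp : p.IsPath
  swap
  · have hlt : p.bypass.length < n := by
      refine lt_of_le_of_ne (hn ▸ p.length_bypass_le_length) fun h => hp ?_
      have := SimpleGraph.Walk.bypass_eq_self_of_length_le_length_bypass p (by omega)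
      rw [← this]
      exact p.bypass_isPath
    exact ih _ hlt a b p.bypass rfl (fun x hx => hY x (p.support_bypass_subset_support hx)) hta hbs
  have hn0 : 1 ≤ p.length := by
    rcases Nat.eq_zero_or_pos p.length with h | h
    · exact absurd (SimpleGraph.Walk.eq_of_length_eq_zero h) hab
    · exact h
  have hsp : s ∉ p.support := fun h => hs (hY s h)
  have htp : t ∉ p.support := fun h => ht (hY t h)
  -- close `p` up to the cycle `s, t, a, …, b, s`; each possible chord shortens `p`
  let q : H.Walk t s := SimpleGraph.Walk.cons hta (p.concat hbs)
  have hqp : q.IsPath := by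
    refine SimpleGraph.Walk.IsPath.cons (hp.concat hsp hbs) ?_
    rw [SimpleGraph.Walk.support_concat]
    simp [htp, hst.ne']
  let c : H.Walk s s := SimpleGraph.Walk.cons hst q
  have hc : c.IsCycle := by
    refine (SimpleGraph.Walk.cons_isCycle_iff q hst).2 ⟨hqp, ?_⟩
    intro hmem
    simp only [q, SimpleGraph.Walk.edges_cons, SimpleGraph.Walk.edges_concat, List.mem_cons,
      List.concat_eq_append, List.mem_append, List.not_mem_nil, or_false] at hmem
    rcases hmem with h | h | h
    · rw [Sym2.eq_swap, Sym2.congr_right] at h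
      exact hsp (h ▸ p.start_mem_support)
    · exact hsp (p.fst_mem_support_of_mem_edges h)
    · rw [Sym2.eq_swap, Sym2.congr_left] at h
      exact htp (h ▸ p.end_mem_support)
  obtain ⟨x, y, hx, hy, hxy, hne⟩ := hH s c hc (by
    simp only [c, q, SimpleGraph.Walk.length_cons, SimpleGraph.Walk.length_concat]; omega)
  have hsupp : ∀ z, z ∈ c.support → z = s ∨ z = t ∨ z ∈ p.support := by
    intro z hz
    simp only [c, q, SimpleGraph.Walk.support_cons, SimpleGraph.Walk.support_concat,
      List.mem_cons, List.mem_append, List.not_mem_nil, or_false] at hz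
    tauto
  have hedge : ∀ e, e ∉ c.edges → e ≠ s(s, t) ∧ e ≠ s(t, a) ∧ e ∉ p.edges ∧ e ≠ s(b, s) := by
    intro e he
    simp only [c, q, SimpleGraph.Walk.edges_cons, SimpleGraph.Walk.edges_concat, List.mem_cons,
      List.concat_eq_append, List.mem_append, List.not_mem_nil, or_false] at he
    tauto
  -- a chord at `s`
  have key_s : ∀ y ∈ p.support, H.Adj s y → s(s, y) ∉ c.edges →
      ∃ x ∈ Y, H.Adj x s ∧ H.Adj x t := by
    intro y hy hsy hne
    have hyb : y ≠ b := by
      rintro rfl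
      exact (hedge _ hne).2.2.2 Sym2.eq_swap
    exact ih _ (hn ▸ p.length_takeUntil_lt_length hy hyb) a y (p.takeUntil y hy) rfl
      (fun x hx => hY x (p.support_takeUntil_subset_support hy hx)) hta hsy.symm
  -- a chord at `t`
  have key_t : ∀ y ∈ p.support, H.Adj t y → s(t, y) ∉ c.edges →
      ∃ x ∈ Y, H.Adj x s ∧ H.Adj x t := by
    intro y hy hsy hne
    have hya : y ≠ a := by
      rintro rfl
      exact (hedge _ hne).2.1 rfl
    have hlen : (p.dropUntil y hy).length < n := by
      have h1 := congrArg SimpleGraph.Walk.length (p.take_spec hy)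
      rw [SimpleGraph.Walk.length_append] at h1
      have h2 : (p.takeUntil y hy).length ≠ 0 := fun h =>
        hya (SimpleGraph.Walk.eq_of_length_eq_zero h).symm
      omega
    exact ih _ hlen y b (p.dropUntil y hy) rfl
      (fun x hx => hY x (p.support_dropUntil_subset_support hy hx)) hsy hbs
  -- a chord between two vertices of the path
  have key_p : ∀ i j, i < j → j ≤ p.length → H.Adj (p.getVert i) (p.getVert j) →
      s(p.getVert i, p.getVert j) ∉ c.edges → ∃ x ∈ Y, H.Adj x s ∧ H.Adj x t := by
    intro i j hij hj hadj hne
    have hj' : j ≠ i + 1 := by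
      rintro rfl
      refine (hedge _ hne).2.2.1 ?_
      rw [SimpleGraph.Walk.mk_mem_edges_iff_exists]
      exact ⟨i, by omega, rfl⟩
    refine ih _ ?_ a b ((p.take i).append (SimpleGraph.Walk.cons hadj (p.drop j))) rfl ?_ hta hbs
    · rw [SimpleGraph.Walk.length_append, SimpleGraph.Walk.length_cons,
        SimpleGraph.Walk.take_length, SimpleGraph.Walk.drop_length]
      omega
    · intro z hz
      rw [SimpleGraph.Walk.mem_support_append_iff, SimpleGraph.Walk.support_cons,
        List.mem_cons] at hz
      rcases hz with h | h | h
      · exact hY z ((p.isSubwalk_take i).support_subset h)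
      · exact hY z (h ▸ p.getVert_mem_support i)
      · exact hY z ((p.isSubwalk_drop j).support_subset h)
  rcases hsupp x hx with rfl | rfl | hxp <;> rcases hsupp y hy with rfl | rfl | hyp
  · exact absurd hxy (H.loopless.irrefl _)
  · exact absurd rfl (hedge _ hne).1
  · exact key_s y hyp hxy hne
  · exact absurd Sym2.eq_swap (hedge _ hne).1
  · exact absurd hxy (H.loopless.irrefl _)
  · exact key_t y hyp hxy hne
  · exact key_s x hxp hxy.symm (Sym2.eq_swap ▸ hne)
  · exact key_t x hxp hxy.symm (Sym2.eq_swap ▸ hne)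
  · obtain ⟨i, rfl, hi⟩ := SimpleGraph.Walk.mem_support_iff_exists_getVert.1 hxp
    obtain ⟨j, rfl, hj⟩ := SimpleGraph.Walk.mem_support_iff_exists_getVert.1 hyp
    rcases lt_trichotomy i j with h | rfl | h
    · exact key_p i j h hj hxy hne
    · exact absurd hxy (H.loopless.irrefl _)
    · exact key_p j i h hi hxy.symm (Sym2.eq_swap ▸ hne)

/-- A walk ending at a neighbour of `s` can be cut off at its first neighbour of `s`. -/
lemma exists_walk_first {X : Type*} {H : SimpleGraph X} {s : X} {a b : X} (p : H.Walk a b)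
    (hb : H.Adj b s) : ∃ (d : X) (q : H.Walk a d), (∀ x ∈ q.support, x ∈ p.support) ∧
      H.Adj d s ∧ ∀ x ∈ q.support, H.Adj x s → x = d := by
  induction p with
  | nil => exact ⟨_, .nil, by simp, hb, by simp⟩
  | @cons a c b h p ih =>
    by_cases ha : H.Adj a s
    · exact ⟨a, .nil, by simp, ha, by simp⟩
    · obtain ⟨d, q, h1, h2, h3⟩ := ih hb
      refine ⟨d, .cons h q, ?_, h2, ?_⟩
      · intro x hx
        rw [SimpleGraph.Walk.support_cons, List.mem_cons] at hx ⊢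
        exact hx.imp_right (h1 x)
      · intro x hx hxs
        rw [SimpleGraph.Walk.support_cons, List.mem_cons] at hx
        rcases hx with rfl | hx
        · exact absurd hxs ha
        · exact h3 x hx hxs

/-! ### A well-ordered construction of chordal graphs -/

/-- Any two distinct vertices of `A` that are joined by a path with nonempty interior outside `A`
are adjacent; equivalently, every component of the complement of `A` attaches to a clique. -/
def CliqueAttached {X : Type*} (H : SimpleGraph X) (A : Set X) : Prop :=
  ∀ x ∈ A, ∀ y ∈ A, x ≠ y → ∀ (a b : X) (p : H.Walk a b), (∀ z ∈ p.support, z ∉ A) →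
    H.Adj x a → H.Adj b y → H.Adj x y

/-- One step of the construction. For a component `C` outside `A`, some `c ∈ C` is adjacent to the
whole attachment clique of `C`; such a `c` can be added to `A`. -/
lemma CliqueAttached.exists_extend {X : Type*} {H : SimpleGraph X} (hH : IsChordal H)
    (hfin : ∀ S : Set X, H.IsClique S → S.Finite) {A : Set X} (hA : CliqueAttached H A)
    (hne : A ≠ Set.univ) :
    ∃ c, c ∉ A ∧ CliqueAttached H (insert c A) ∧ H.IsClique {x | x ∈ A ∧ H.Adj x c} := by
  classical
  obtain ⟨v, hv⟩ := (Set.ne_univ_iff_exists_notMem A).1 hne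
  let C : Set X := {w | ∃ p : H.Walk v w, ∀ z ∈ p.support, z ∉ A}
  let S : Set X := {s | s ∈ A ∧ ∃ w ∈ C, H.Adj s w}
  have hconn : ∀ a ∈ C, ∀ b ∈ C, ∃ p : H.Walk a b, ∀ z ∈ p.support, z ∉ A := by
    rintro a ⟨p, hp⟩ b ⟨q, hq⟩
    refine ⟨p.reverse.append q, fun z hz => ?_⟩
    rw [SimpleGraph.Walk.mem_support_append_iff, SimpleGraph.Walk.support_reverse,
      List.mem_reverse] at hz
    exact hz.elim (hp z) (hq z)
  have hCA : ∀ a ∈ C, a ∉ A := fun a ⟨p, hp⟩ => hp a p.end_mem_support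
  have hext : ∀ a ∈ C, ∀ b, ∀ p : H.Walk a b, (∀ z ∈ p.support, z ∉ A) → b ∈ C := by
    rintro a ⟨q, hq⟩ b p hp
    refine ⟨q.append p, fun z hz => ?_⟩
    rw [SimpleGraph.Walk.mem_support_append_iff] at hz
    exact hz.elim (hq z) (hp z)
  have hS : H.IsClique S := by
    rintro x ⟨hxA, a, ha, hxa⟩ y ⟨hyA, b, hb, hyb⟩ hxy
    obtain ⟨p, hp⟩ := hconn a ha b hb
    exact hA x hxA y hyA hxy a b p hp hxa hyb.symm
  have hSf := hfin S hS
  have hNf : ∀ c, {s | s ∈ S ∧ H.Adj s c}.Finite := fun c => hSf.subset fun s h => h.1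
  have hCne : C.Nonempty := ⟨v, .nil, by simpa using hv⟩
  -- choose `c ∈ C` with the largest number of neighbours in `S`
  obtain ⟨c, hcC, hcmax⟩ : ∃ c ∈ C, ∀ d ∈ C,
      {s | s ∈ S ∧ H.Adj s d}.ncard ≤ {s | s ∈ S ∧ H.Adj s c}.ncard := by
    have hbd : ((fun c => {s | s ∈ S ∧ H.Adj s c}.ncard) '' C).Finite := by
      refine (Set.finite_Iic S.ncard).subset ?_
      rintro _ ⟨c, -, rfl⟩
      exact Set.ncard_le_ncard (fun s h => h.1) hSf
    obtain ⟨_, ⟨c, hc, rfl⟩, hm⟩ := Set.exists_max_image _ id hbd (hCne.image _)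
    exact ⟨c, hc, fun d hd => hm _ ⟨d, hd, rfl⟩⟩
  have hcS : ∀ s ∈ S, H.Adj s c := by
    intro s hs
    by_contra hsc
    obtain ⟨hsA, w, hwC, hsw⟩ := id hs
    obtain ⟨p, hp⟩ := hconn c hcC w hwC
    obtain ⟨d, q, hq1, hds, hq2⟩ := exists_walk_first p hsw.symm
    have hqA : ∀ z ∈ q.support, z ∉ A := fun z hz => hp z (hq1 z hz)
    have hdC : d ∈ C := hext c hcC d q hqA
    refine absurd (hcmax d hdC) (not_le.2 (Set.ncard_lt_ncard ?_ (hNf d)))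
    refine (Set.ssubset_iff_of_subset ?_).2 ⟨s, ⟨hs, hds.symm⟩, fun h => hsc h.2⟩
    rintro t ⟨htS, htc⟩
    have hts : s ≠ t := by
      rintro rfl
      exact hsc htc
    obtain ⟨x, hxq, hxs, hxt⟩ := exists_common_neighbor hH (hS hs htS hts)
      (Y := {x | x ∈ q.support}) (fun h => hqA _ h hsA) (fun h => hqA _ h htS.1)
      _ c d q rfl (fun x hx => hx) htc hds
    obtain rfl := hq2 x hxq hxs
    exact ⟨htS, hxt.symm⟩
  refine ⟨c, hCA c hcC, ?_, ?_⟩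
  · have hnew : ∀ y ∈ A, ∀ (a b : X) (p : H.Walk a b),
        (∀ z ∈ p.support, z ∉ insert c A) → H.Adj c a → H.Adj b y → H.Adj c y := by
      intro y hy a b p hp hca hby
      have hbC : b ∈ C := by
        refine hext c hcC b (.cons hca p) fun z hz => ?_
        rw [SimpleGraph.Walk.support_cons, List.mem_cons] at hz
        rcases hz with rfl | hz
        · exact hCA _ hcC
        · exact fun h => hp z hz (Set.mem_insert_of_mem _ h)
      exact (hcS y ⟨hy, b, hbC, hby.symm⟩).symm
    intro x hx y hy hxy a b p hp hxa hby
    rcases hx with rfl | hx <;> rcases hy with rfl | hy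
    · exact absurd rfl hxy
    · exact hnew y hy a b p hp hxa hby
    · refine (hnew x hx b a p.reverse ?_ hby.symm hxa.symm).symm
      simpa using hp
    · exact hA x hx y hy hxy a b p (fun z hz h => hp z hz (Set.mem_insert_of_mem _ h)) hxa hby
  · exact fun x hx y hy hxy => hS ⟨hx.1, c, hcC, hx.2⟩ ⟨hy.1, c, hcC, hy.2⟩ hxy

/-- A chordal graph without infinite cliques has a well-ordering (given by an injection into the
ordinals) in which the earlier neighbours of every vertex form a clique. -/
lemma exists_simplicial_order {X : Type u} {H : SimpleGraph X} (hH : IsChordal H)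
    (hfin : ∀ S : Set X, H.IsClique S → S.Finite) :
    ∃ ρ : X → Ordinal.{u}, Function.Injective ρ ∧
      ∀ v, H.IsClique {x | ρ x < ρ v ∧ H.Adj x v} := by
  classical
  have hstep : ∀ A : Set X, ∃ c : Option X, (CliqueAttached H A → A ≠ Set.univ →
      ∃ d, c = some d ∧ d ∉ A ∧ CliqueAttached H (insert d A) ∧
        H.IsClique {x | x ∈ A ∧ H.Adj x d}) ∧ (A = Set.univ → c = none) := by
    intro A
    by_cases h : CliqueAttached H A ∧ A ≠ Set.univ
    · obtain ⟨d, hd⟩ := h.1.exists_extend hH hfin h.2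
      exact ⟨some d, fun _ _ => ⟨d, rfl, hd⟩, fun h' => absurd h' h.2⟩
    · exact ⟨none, fun h1 h2 => absurd ⟨h1, h2⟩ h, fun _ => rfl⟩
  choose c hc hcu using hstep
  let next : Set X → Set X := fun A => A ∪ {x | c A = some x}
  -- the stages of the construction: `B α` is the union of the successors of all earlier stages
  let B : Ordinal.{u} → Set X :=
    WellFounded.fix (r := (· < ·)) Ordinal.lt_wf
      (fun α ih => {x | ∃ (β : Ordinal.{u}) (h : β < α), x ∈ next (ih β h)})
  have hB : ∀ α, B α = {x | ∃ β, β < α ∧ x ∈ next (B β)} := by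
    intro α
    have := WellFounded.fix_eq (r := (· < ·)) Ordinal.lt_wf
      (fun (α : Ordinal.{u}) (ih : ∀ β, β < α → Set X) =>
        {x | ∃ (β : Ordinal.{u}) (h : β < α), x ∈ next (ih β h)}) α
    refine this.trans ?_
    ext x
    simp only [Set.mem_ofPred_eq, exists_prop]
    rfl
  have hnext : ∀ {β α}, β < α → next (B β) ⊆ B α := by
    intro β α h x hx
    rw [hB]
    exact ⟨β, h, hx⟩
  have hmono : ∀ {β α}, β ≤ α → B β ⊆ B α := by
    intro β α h
    rcases h.eq_or_lt with rfl | h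
    · exact subset_rfl
    · exact Set.subset_union_left.trans (hnext h)
  have hatt : ∀ α, CliqueAttached H (B α) := by
    intro α
    induction α using WellFoundedLT.induction with
    | _ α ih =>
    have hnatt : ∀ β < α, CliqueAttached H (next (B β)) := by
      intro β hβ
      by_cases hu : B β = Set.univ
      · have : next (B β) = B β := by simp [next, hcu _ hu]
        rw [this]
        exact ih β hβ
      · obtain ⟨d, hd, -, h, -⟩ := hc _ (ih β hβ) hu
        have : next (B β) = insert d (B β) := by
          ext x
          simp [next, hd, eq_comm]
        rwa [this]
    intro x hx y hy hxy a b p hp hxa hby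
    rw [hB] at hx hy
    obtain ⟨β, hβ, hx⟩ := hx
    obtain ⟨γ, hγ, hy⟩ := hy
    have hmn : ∀ {β γ}, β ≤ γ → next (B β) ⊆ next (B γ) := by
      intro β γ h
      rcases h.eq_or_lt with rfl | h
      · exact subset_rfl
      · exact (hnext h).trans Set.subset_union_left
    have hmax : max β γ < α := max_lt hβ hγ
    exact hnatt _ hmax x (hmn (le_max_left _ _) hx) y (hmn (le_max_right _ _) hy) hxy a b p
      (fun z hz h => hp z hz (hnext hmax h)) hxa hby
  -- the construction exhausts all vertices, since each stage adds a new one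
  obtain ⟨θ, hθ⟩ : ∃ θ, B θ = Set.univ := by
    by_contra! hcon
    choose d hd hdn _ _ using fun α => hc _ (hatt α) (hcon α)
    refine not_injective_of_ordinal d fun α β hαβ => ?_
    have hin : ∀ {α β}, α < β → d α ≠ d β := fun {α β} h heq =>
      hdn β (heq ▸ hnext h (Or.inr (hd α)))
    rcases lt_trichotomy α β with h | h | h
    · exact absurd hαβ (hin h)
    · exact h
    · exact absurd hαβ.symm (hin h)
  have hex : ∀ v, ∃ α, c (B α) = some v ∧ v ∉ B α := by
    intro v
    have hne : {α | v ∈ next (B α)}.Nonempty := ⟨θ, Or.inl (hθ ▸ Set.mem_univ v)⟩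
    obtain ⟨α, hα, hmin⟩ := Ordinal.lt_wf.has_min _ hne
    have hvn : v ∉ B α := by
      rw [hB]
      rintro ⟨β, hβ, hv⟩
      exact hmin β hv hβ
    exact ⟨α, hα.resolve_left hvn, hvn⟩
  choose ρ hρ hρn using hex
  refine ⟨ρ, fun x y h => ?_, fun v => ?_⟩
  · have h1 := hρ x
    rw [h, hρ y] at h1
    exact (Option.some.inj h1).symm
  · obtain ⟨d, hd, -, -, hcl⟩ := hc _ (hatt (ρ v)) (fun h => hρn v (h ▸ Set.mem_univ v))
    obtain rfl : v = d := Option.some.inj ((hρ v).symm.trans hd)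
    exact fun x hx y hy hxy => hcl ⟨hnext hx.1 (Or.inr (hρ x)), hx.2⟩
      ⟨hnext hy.1 (Or.inr (hρ y)), hy.2⟩ hxy

/-! ### Graphs without nested closed neighbourhoods -/

/-- `h` sends every vertex to a representative of its class so that the fibres of `h` are cliques
and the representatives are pairwise non-adjacent. -/
structure IsCliqueSelector {X : Type*} (H : SimpleGraph X) (h : X → X) : Prop where
  idem : ∀ x, h (h x) = h x
  fibre : ∀ x y, h x = h y → Near H x y
  indep : ∀ x y, ¬ H.Adj (h x) (h y)

/-- If earlier neighbours form cliques and no closed neighbourhood contains another one, a clique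
selector is built greedily: a vertex `v` joins the class of an earlier chosen representative `i ≥ v` near
`v` if there is one, and otherwise takes as representative the first `w ≥ v` near `v` that is not
adjacent to any representative chosen before. -/
lemma exists_selector_of_reduced {X : Type u} {H : SimpleGraph X} (ρ : X → Ordinal.{u})
    (hinj : Function.Injective ρ) (hcl : ∀ v, H.IsClique {x | ρ x < ρ v ∧ H.Adj x v})
    (hred : ∀ u v, (∀ x, Near H v x → Near H u x) → u = v) :
    ∃ h, IsCliqueSelector H h := by
  classical
  have hwf : WellFounded (fun x y : X => ρ x < ρ y) := InvImage.wf ρ Ordinal.lt_wf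
  -- `Cand v ih w`: the vertex `w` may represent `v`, where `ih` gives the earlier representatives
  let Cand : (v : X) → ((u : X) → ρ u < ρ v → X) → X → Prop := fun v ih w =>
    ρ v ≤ ρ w ∧ Near H v w ∧ ∀ u (hu : ρ u < ρ v), ¬ H.Adj w (ih u hu)
  have hpick : ∀ (v : X) (ih : (u : X) → ρ u < ρ v → X), ∃ r : X,
      ((∃ u, ∃ hu : ρ u < ρ v, ρ v ≤ ρ (ih u hu) ∧ Near H v (ih u hu)) →
        ∃ u, ∃ hu : ρ u < ρ v, ρ v ≤ ρ (ih u hu) ∧ Near H v (ih u hu) ∧ r = ih u hu) ∧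
      (¬ (∃ u, ∃ hu : ρ u < ρ v, ρ v ≤ ρ (ih u hu) ∧ Near H v (ih u hu)) →
        (∃ w, Cand v ih w) → Cand v ih r ∧ ∀ w, Cand v ih w → ρ r ≤ ρ w) := by
    intro v ih
    by_cases h1 : ∃ u, ∃ hu : ρ u < ρ v, ρ v ≤ ρ (ih u hu) ∧ Near H v (ih u hu)
    · obtain ⟨u, hu, h, h'⟩ := id h1
      exact ⟨ih u hu, fun _ => ⟨u, hu, h, h', rfl⟩, fun h => absurd h1 h⟩
    · by_cases h2 : ∃ w, Cand v ih w
      · obtain ⟨r, hr, hm⟩ := hwf.has_min {w | Cand v ih w} h2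
        exact ⟨r, fun h => absurd h h1, fun _ _ => ⟨hr, fun w hw => not_lt.1 (hm w hw)⟩⟩
      · exact ⟨v, fun h => absurd h h1, fun _ h => absurd h h2⟩
  choose pick hpick1 hpick2 using hpick
  obtain ⟨g, hg⟩ : ∃ g : X → X, ∀ v, g v = pick v (fun u _ => g u) :=
    ⟨hwf.fix pick, fun v => hwf.fix_eq pick v⟩
  have hg1 : ∀ v, (∃ u, ρ u < ρ v ∧ ρ v ≤ ρ (g u) ∧ Near H v (g u)) →
      ∃ u, ρ u < ρ v ∧ ρ v ≤ ρ (g u) ∧ Near H v (g u) ∧ g v = g u := by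
    rintro v ⟨u, hu, h⟩
    obtain ⟨u', hu', h1, h2, h3⟩ := hpick1 v (fun u _ => g u) ⟨u, hu, h⟩
    exact ⟨u', hu', h1, h2, (hg v).trans h3⟩
  have hg2 : ∀ v, ¬ (∃ u, ρ u < ρ v ∧ ρ v ≤ ρ (g u) ∧ Near H v (g u)) →
      (∃ w, ρ v ≤ ρ w ∧ Near H v w ∧ ∀ u, ρ u < ρ v → ¬ H.Adj w (g u)) →
      (ρ v ≤ ρ (g v) ∧ Near H v (g v) ∧ ∀ u, ρ u < ρ v → ¬ H.Adj (g v) (g u)) ∧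
      ∀ w, ρ v ≤ ρ w → Near H v w → (∀ u, ρ u < ρ v → ¬ H.Adj w (g u)) → ρ (g v) ≤ ρ w := by
    rintro v hv ⟨w, hw⟩
    have := hpick2 v (fun u _ => g u)
      (by rintro ⟨u, hu, h⟩; exact hv ⟨u, hu, h⟩) ⟨w, hw⟩
    rw [← hg v] at this
    exact ⟨this.1, fun w h1 h2 h3 => this.2 w ⟨h1, h2, h3⟩⟩
  have hlt : ∀ {x y}, x ≠ y → ρ x ≤ ρ y → ρ x < ρ y := fun hne hle =>
    lt_of_le_of_ne hle fun h => hne (hinj h)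
  have hclN : ∀ {v x y}, ρ x < ρ v → ρ y < ρ v → H.Adj x v → H.Adj y v → Near H x y := by
    intro v x y hx hy hxv hyv
    by_cases h : x = y
    · exact .inl h
    · exact .inr (hcl v ⟨hx, hxv⟩ ⟨hy, hyv⟩ h)
  have main : ∀ v, ρ v ≤ ρ (g v) ∧ Near H v (g v) ∧ ∀ u, ρ u < ρ v → ¬ H.Adj (g v) (g u) := by
    intro v
    induction v using hwf.induction with
    | _ v ih =>
    have hind : ∀ u u', ρ u < ρ v → ρ u' < ρ v → ¬ H.Adj (g u) (g u') := by
      intro u u' hu hu' hadj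
      rcases lt_trichotomy (ρ u) (ρ u') with h | h | h
      · exact (ih u' hu').2.2 u h hadj.symm
      · rw [hinj h] at hadj
        exact hadj.ne rfl
      · exact (ih u hu).2.2 u' h hadj
    by_cases hcov : ∃ u, ρ u < ρ v ∧ ρ v ≤ ρ (g u) ∧ Near H v (g u)
    · obtain ⟨u, hu, h1, h2, h3⟩ := hg1 v hcov
      rw [h3]
      exact ⟨h1, h2, fun u' hu' => hind u u' hu hu'⟩
    refine (hg2 v hcov ?_).1
    have hcov' : ∀ u, ρ u < ρ v → Near H v (g u) → ρ (g u) < ρ v := fun u hu h =>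
      not_le.1 fun h' => hcov ⟨u, hu, h', h⟩
    by_cases hexp : ∀ u, ρ u < ρ v → ¬ H.Adj v (g u)
    · exact ⟨v, le_rfl, .inl rfl, hexp⟩
    push Not at hexp
    obtain ⟨u₀, hu₀, hadj₀⟩ := hexp
    have hlt₀ := hcov' u₀ hu₀ (.inr hadj₀)
    -- `g u₀` is the only representative near `v`
    have huniq : ∀ u, ρ u < ρ v → Near H v (g u) → g u = g u₀ := by
      intro u hu hn
      have h1 := hcov' u hu hn
      have hne : v ≠ g u := by
        intro h
        rw [← h] at h1
        exact lt_irrefl _ h1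
      exact (hclN h1 hlt₀ (hn.resolve_left hne).symm hadj₀.symm).resolve_right (hind u u₀ hu hu₀)
    obtain ⟨w, hvw, hw₀⟩ : ∃ w, Near H v w ∧ ¬ Near H (g u₀) w := by
      by_contra! hcon
      exact hadj₀.ne (hred _ _ hcon).symm
    have hvw' : H.Adj v w := hvw.resolve_left (by rintro rfl; exact hw₀ (.inr hadj₀.symm))
    have hlvw : ρ v < ρ w := by
      refine hlt hvw'.ne (not_lt.1 fun h => hw₀ ?_)
      exact hclN hlt₀ h hadj₀.symm hvw'.symm
    refine ⟨w, hlvw.le, hvw, ?_⟩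
    by_contra! hcon
    -- take the first `u` whose representative is adjacent to `w`
    obtain ⟨u, ⟨hu, hwu⟩, hmin⟩ := hwf.has_min {u | ρ u < ρ v ∧ H.Adj w (g u)} hcon
    have hmin' : ∀ u', ρ u' < ρ u → ¬ H.Adj w (g u') := fun u' h h' =>
      hmin u' ⟨h.trans hu, h'⟩ h
    rcases lt_or_ge (ρ (g u)) (ρ w) with hl | hl
    · have := huniq u hu (hclN hlvw hl hvw' hwu.symm)
      exact hw₀ (.inr (this ▸ hwu.symm))
    have hl : ρ w < ρ (g u) := hlt hwu.ne hl
    have huncov : ¬ ∃ u', ρ u' < ρ u ∧ ρ u ≤ ρ (g u') ∧ Near H u (g u') := by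
      intro h
      obtain ⟨u', hu', -, -, h⟩ := hg1 u h
      exact hmin' u' hu' (h ▸ hwu)
    have hugu : H.Adj u (g u) := (ih u hu).2.1.resolve_left (by
      intro h
      rw [← h] at hl
      exact lt_irrefl _ (hl.trans (hu.trans hlvw)))
    have huw : Near H u w := hclN ((hu.trans hlvw).trans hl) hl hugu hwu
    exact absurd ((hg2 u huncov ⟨g u, ih u hu⟩).2 w (hu.trans hlvw).le huw hmin') (not_le.2 hl)
  have hind : ∀ u v, ¬ H.Adj (g u) (g v) := by
    intro u u' hadj
    rcases lt_trichotomy (ρ u) (ρ u') with h | h | h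
    · exact (main u').2.2 u h hadj.symm
    · rw [hinj h] at hadj
      exact hadj.ne rfl
    · exact (main u).2.2 u' h hadj
  refine ⟨g, fun x => ?_, fun x y hxy => ?_, hind⟩
  · by_cases hx : x = g x
    · rw [← hx, ← hx]
    obtain ⟨u, -, -, h1, h2⟩ := hg1 (g x) ⟨x, hlt hx (main x).1, le_rfl, .inl rfl⟩
    rw [h2]
    exact (h1.resolve_right (hind x u)).symm
  · have hx := (main x).2.1
    have hy := (main y).2.1
    by_cases h1 : x = g x
    · rw [← hxy, ← h1] at hy
      exact hy.symm
    by_cases h2 : y = g y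
    · rw [hxy, ← h2] at hx
      exact hx
    refine hclN (hlt h1 (main x).1) (hxy ▸ hlt h2 (main y).1) (hx.resolve_left h1) ?_
    rw [hxy]
    exact hy.resolve_left h2

/-! ### Removing dominating vertices -/

/-- An idempotent map reflecting the relation `Near`: a clique selector on its range
pulls back to one on the whole graph. -/
structure IsFold {X : Type*} (H : SimpleGraph X) (f : X → X) : Prop where
  idem : ∀ x, f (f x) = f x
  reflects : ∀ x y, Near H (f x) (f y) → Near H x y

/-- `g` folds at least as much as `f`. -/
def FoldLE {X : Type*} (f g : X → X) : Prop := (∀ x, g (f x) = g x) ∧ ∀ x, f (g x) = g x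

lemma FoldLE.trans {X : Type*} {f g k : X → X} (h1 : FoldLE f g) (h2 : FoldLE g k) :
    FoldLE f k :=
  ⟨fun x => by rw [← h2.1 (f x), h1.1, h2.1], fun x => by rw [← h2.2 x, h1.2]⟩

lemma IsFold.foldLE_self {X : Type*} {H : SimpleGraph X} {f : X → X} (h : IsFold H f) :
    FoldLE f f := ⟨h.idem, h.idem⟩

/-- A chain of folds has an upper bound: the images of a vertex under the folds of the chain form
a clique, hence a finite set, and so they are eventually constant. -/
lemma exists_fold_bound {X : Type*} {H : SimpleGraph X}
    (hfin : ∀ S : Set X, H.IsClique S → S.Finite) (c : Set (X → X))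
    (hc : ∀ f ∈ c, IsFold H f) (htot : ∀ f ∈ c, ∀ g ∈ c, FoldLE f g ∨ FoldLE g f)
    (hne : c.Nonempty) :
    ∃ F, IsFold H F ∧ ∀ f ∈ c, FoldLE f F := by
  classical
  have hstab : ∀ x, ∃ f ∈ c, ∀ g ∈ c, FoldLE f g → g x = f x := by
    intro x
    let T : Set X := {y | ∃ f ∈ c, y = f x}
    have hT : T.Finite := by
      refine hfin T ?_
      have hle : ∀ f ∈ c, ∀ g ∈ c, FoldLE f g → Near H (f x) (g x) := by
        intro f hf g hg hfg
        refine (hc g hg).reflects _ _ (.inl ?_)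
        rw [hfg.1, (hc g hg).idem]
      rintro _ ⟨f, hf, rfl⟩ _ ⟨g, hg, rfl⟩ hne
      rcases htot f hf g hg with h | h
      · exact (hle f hf g hg h).resolve_left hne
      · exact (hle g hg f hf h).symm.resolve_left hne
    -- a fold of the chain whose range meets `T` in the fewest points
    obtain ⟨f, hf, hmin⟩ := (InvImage.wf (fun f : X → X => (T ∩ Set.range f).ncard)
      (wellFounded_lt (α := ℕ))).has_min c hne
    refine ⟨f, hf, fun g hg hfg => ?_⟩
    by_contra hgx
    refine hmin g hg (Set.ncard_lt_ncard ?_ (hT.subset Set.inter_subset_left))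
    refine (Set.ssubset_iff_of_subset ?_).2 ⟨f x, ⟨⟨f, hf, rfl⟩, x, rfl⟩, ?_⟩
    · rintro _ ⟨h, z, rfl⟩
      exact ⟨h, g z, hfg.2 z⟩
    · rintro ⟨-, z, hz⟩
      refine hgx ?_
      rw [← hfg.1 x, ← hz, (hc g hg).idem]
  choose s hs hs' using hstab
  have hdir : ∀ f ∈ c, ∀ g ∈ c, ∃ k ∈ c, FoldLE f k ∧ FoldLE g k := by
    intro f hf g hg
    rcases htot f hf g hg with h | h
    · exact ⟨g, hg, h, (hc g hg).foldLE_self⟩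
    · exact ⟨f, hf, (hc f hf).foldLE_self, h⟩
  have hdir2 : ∀ g ∈ c, ∀ x y, ∃ k ∈ c, FoldLE g k ∧ k x = s x x ∧ k y = s y y := by
    intro g hg x y
    obtain ⟨k, hk, h1, h2⟩ := hdir _ (hs x) _ (hs y)
    obtain ⟨l, hl, h3, h4⟩ := hdir _ hk _ hg
    exact ⟨l, hl, h4, hs' x l hl (h1.trans h3), hs' y l hl (h2.trans h3)⟩
  obtain ⟨f₀, hf₀⟩ := hne
  refine ⟨fun x => s x x, ⟨fun x => ?_, fun x y h => ?_⟩, fun g hg => ⟨fun x => ?_, fun x => ?_⟩⟩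
  · obtain ⟨k, hk, -, h1, h2⟩ := hdir2 f₀ hf₀ x (s x x)
    rw [← h2, ← h1, (hc k hk).idem]
  · obtain ⟨k, hk, -, h1, h2⟩ := hdir2 f₀ hf₀ x y
    refine (hc k hk).reflects x y ?_
    rw [h1, h2]
    exact h
  · obtain ⟨k, hk, h, h1, h2⟩ := hdir2 g hg x (g x)
    change s (g x) (g x) = s x x
    rw [← h1, ← h2, h.1]
  · obtain ⟨k, hk, h, h1, -⟩ := hdir2 g hg x x
    change g (s x x) = s x x
    rw [← h1, h.2]

/-- There is a fold whose range contains no two distinct vertices with nested closed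
neighbourhoods (within the range), obtained from Zorn's lemma. -/
lemma exists_reduced_fold {X : Type*} {H : SimpleGraph X}
    (hfin : ∀ S : Set X, H.IsClique S → S.Finite) :
    ∃ f, IsFold H f ∧ ∀ u v, f u = u → f v = v →
      (∀ x, f x = x → Near H v x → Near H u x) → u = v := by
  classical
  have hid : IsFold H id := ⟨fun _ => rfl, fun _ _ h => h⟩
  obtain ⟨⟨f, hf⟩, hmax⟩ := exists_maximal_of_chains_bounded
    (α := {f : X → X // IsFold H f}) (r := fun f g => FoldLE f.1 g.1) (by
      intro c hc
      rcases c.eq_empty_or_nonempty with rfl | hne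
      · exact ⟨⟨id, hid⟩, by simp⟩
      · obtain ⟨F, hF, hb⟩ := exists_fold_bound hfin (Subtype.val '' c)
          (by rintro _ ⟨f, -, rfl⟩; exact f.2)
          (by
            rintro _ ⟨f, hf, rfl⟩ _ ⟨g, hg, rfl⟩
            by_cases h : f = g
            · subst h
              exact .inl f.2.foldLE_self
            · exact hc hf hg h)
          (hne.image _)
        exact ⟨⟨F, hF⟩, fun a ha => hb _ ⟨a, ha, rfl⟩⟩)
    (fun h1 h2 => FoldLE.trans h1 h2)
  refine ⟨f, hf, fun u v hu hv huv => ?_⟩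
  by_contra hne
  -- fold further by sending the dominating vertex `u` to `v`
  let e : X → X := fun x => if x = u then v else x
  have heu : e u = v := if_pos rfl
  have heo : ∀ {x}, x ≠ u → e x = x := fun h => if_neg h
  have hef : ∀ x, f (e (f x)) = e (f x) := by
    intro x
    by_cases h : f x = u
    · rw [h, heu, hv]
    · rw [heo h, hf.idem]
  have hee : ∀ x, e (e x) = e x := by
    intro x
    by_cases h : x = u
    · rw [h, heu, heo (Ne.symm hne)]
    · rw [heo h, heo h]
  have hg : IsFold H (fun x => e (f x)) := by
    refine ⟨fun x => ?_, fun x y h => hf.reflects x y ?_⟩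
    · rw [hef, hee]
    · change Near H (e (f x)) (e (f y)) at h
      by_cases h1 : f x = u <;> by_cases h2 : f y = u
      · exact .inl (h1.trans h2.symm)
      · rw [h1, heu, heo h2] at h
        rw [h1]
        exact huv _ (hf.idem y) h
      · rw [h2, heu, heo h1] at h
        rw [h2]
        exact (huv _ (hf.idem x) h.symm).symm
      · rwa [heo h1, heo h2] at h
  have hle : FoldLE f (fun x => e (f x)) := by
    refine ⟨fun x => ?_, fun x => hef x⟩
    change e (f (f x)) = e (f x)
    rw [hf.idem]
  have hge : FoldLE (fun x => e (f x)) f := hmax ⟨_, hg⟩ hle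
  have h1 := hge.2 u
  change e (f (f u)) = f u at h1
  rw [hu, hu, heu] at h1
  exact hne h1.symm

/-- A graph without infinite cliques in which earlier neighbours form cliques has a clique
selector: fold away dominating vertices, then select greedily in the range. -/
lemma exists_selector {X : Type u} {H : SimpleGraph X}
    (hfin : ∀ S : Set X, H.IsClique S → S.Finite) (ρ : X → Ordinal.{u})
    (hinj : Function.Injective ρ) (hcl : ∀ v, H.IsClique {x | ρ x < ρ v ∧ H.Adj x v}) :
    ∃ h, IsCliqueSelector H h := by
  obtain ⟨f, hf, hred⟩ := exists_reduced_fold hfin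
  let R : Set X := {x | f x = x}
  have hnear : ∀ x y : R, Near (H.induce R) x y ↔ Near H x.1 y.1 := by
    intro x y
    simp [Near, Subtype.ext_iff]
  obtain ⟨g, hg⟩ := exists_selector_of_reduced (H := H.induce R) (fun x => ρ x.1)
    (fun x y h => Subtype.ext (hinj h))
    (fun v x hx y hy hxy => hcl v.1 hx hy fun h => hxy (Subtype.ext h))
    (fun u v huv => Subtype.ext (hred u.1 v.1 u.2 v.2 fun x hx h =>
      (hnear u ⟨x, hx⟩).1 (huv ⟨x, hx⟩ ((hnear v ⟨x, hx⟩).2 h))))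
  let F : X → R := fun x => ⟨f x, hf.idem x⟩
  have hF : ∀ r : R, F r.1 = r := fun r => Subtype.ext r.2
  refine ⟨fun x => (g (F x)).1, fun x => ?_, fun x y h => ?_, fun x y => hg.indep _ _⟩
  · rw [hF, hg.idem]
  · exact hf.reflects x y ((hnear _ _).1 (hg.fibre (F x) (F y) (Subtype.ext h)))

/-- A (possibly infinite) graph whose complement is chordal and all of whose
independent sets are finite is strongly perfect. -/
theorem complement_chordal_stronglyPerfect {V : Type*} (G : SimpleGraph V)
    (hchordal : IsChordal Gᶜ)
    (hfin : ∀ S : Set V, IsIndepSet' G S → S.Finite) :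
    IsStronglyPerfect G := by
  intro W
  have hfin' : ∀ S : Set V, Gᶜ.IsClique S → S.Finite := fun S hS =>
    hfin S fun a ha b hb hab => ((G.compl_adj a b).1 (hS ha hb hab)).2
  obtain ⟨ρ, hinj, hcl⟩ := exists_simplicial_order hchordal hfin'
  obtain ⟨h, hh⟩ := exists_selector (H := Gᶜ.induce W)
    (fun S hS => by
      refine Set.Finite.of_finite_image (hfin' (Subtype.val '' S) ?_) Subtype.val_injective.injOn
      rintro _ ⟨x, hx, rfl⟩ _ ⟨y, hy, rfl⟩ hxy
      exact hS hx hy fun h => hxy (congrArg _ h))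
    (fun x => ρ x.1) (fun x y h => Subtype.ext (hinj h))
    (fun v x hx y hy hxy => hcl v.1 hx hy fun h => hxy (Subtype.ext h))
  refine ⟨Set.range fun x : W => Subtype.val '' {y : W | h y = h x},
    Set.range fun x : W => (h x).1, ?_, ?_, ?_, ?_, ?_, ?_⟩
  · rintro _ ⟨x, rfl⟩
    exact (h x).2
  · rintro _ ⟨x, rfl⟩ _ ⟨y, rfl⟩ hxy
    by_contra hadj
    exact hh.indep x y ((G.compl_adj _ _).2 ⟨hxy, hadj⟩)
  · rintro _ ⟨x, rfl⟩
    refine ⟨Subtype.coe_image_subset W _, ?_⟩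
    rintro _ ⟨y, hy, rfl⟩ _ ⟨z, hz, rfl⟩ hyz
    have := (hh.fibre y z (hy.trans hz.symm)).resolve_left fun h => hyz (congrArg _ h)
    exact ((G.compl_adj _ _).1 this).2
  · rintro _ ⟨x, rfl⟩ _ ⟨y, rfl⟩ hne
    refine Set.disjoint_left.2 ?_
    rintro _ ⟨z, hz, rfl⟩ ⟨z', hz', hzz⟩
    obtain rfl := Subtype.ext hzz
    refine hne ?_
    have hxy : h x = h y := hz.symm.trans hz'
    simp only [hxy]
  · ext w
    constructor
    · rintro ⟨_, ⟨x, rfl⟩, hw⟩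
      exact Subtype.coe_image_subset W _ hw
    · intro hw
      exact ⟨_, ⟨⟨w, hw⟩, rfl⟩, ⟨w, hw⟩, rfl, rfl⟩
  · rintro _ ⟨x, rfl⟩
    exact ⟨(h x).1, ⟨h x, hh.idem x, rfl⟩, x, rfl⟩
end
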